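/- arXiv:2306.06187 — 2 statements merged into one kernel-verified Lean document; each statement's English description precedes it below -/
import Mathlib

section
/- Let n ≥ 3, let F ⊂ ℝⁿ be compact and n-2 < s ≤ n. Then Cap_{n-2}(F) ≥ c(s,n) · (ℋ^s_∞(F))^{(n-2)/s}, where ℋ^s_∞ denotes the s-dimensional Hausdorff content and Cap_{n-2} the Newtonian capacity. -/
open MeasureTheory Metric
open scoped ENNReal

/-- The `s`-dimensional Hausdorff content `ℋ^s_∞`. -/
noncomputable def hContent {X : Type*} [EMetricSpace X] (s : ℝ) (E : Set X) : ℝ≥0∞ :=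
  ⨅ (A : ℕ → Set X) (_ : E ⊆ ⋃ i, A i), ∑' i, EMetric.diam (A i) ^ s

/-- The constant `c_n = (n-2) ℋ^{n-1}(𝕊^{n-1})` in the fundamental solution of `-Δ` in `ℝⁿ`. -/
noncomputable def newtKernelConst (n : ℕ) : ℝ≥0∞ :=
  ((n : ℝ≥0∞) - 2) * μH[(n : ℝ) - 1] (sphere (0 : EuclideanSpace ℝ (Fin n)) 1)

/-- The energy `I_{n-2}(μ) = ∬ c_n |x-y|^{-(n-2)} dμ(x) dμ(y)` of a measure,
for the kernel given by the fundamental solution of the Laplacian in `ℝⁿ`. -/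
noncomputable def newtEnergy (n : ℕ) {m : ℕ} (μ : Measure (EuclideanSpace ℝ (Fin m))) : ℝ≥0∞ :=
  ∫⁻ x, ∫⁻ y, newtKernelConst n * edist x y ^ (-((n : ℝ) - 2)) ∂μ ∂μ

/-- The Newtonian capacity `Cap_{n-2}(F) = (inf_{μ ∈ M₁(F)} I_{n-2}(μ))⁻¹`, the infimum
being over probability measures supported on `F`. -/
noncomputable def newtCap (n : ℕ) {m : ℕ} (F : Set (EuclideanSpace ℝ (Fin m))) : ℝ≥0∞ :=
  (⨅ (μ : Measure (EuclideanSpace ℝ (Fin m))) (_ : IsProbabilityMeasure μ) (_ : μ Fᶜ = 0),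
    newtEnergy n μ)⁻¹

open scoped NNReal CompactlySupported

lemma wc_nat {X : Type*} [MetricSpace X] (s h : ℝ)
    (H : ∀ t : Finset (X × ℝ≥0), (∀ x, ∃ q ∈ t, dist x q.1 ≤ 5 * q.2) →
      h ≤ ∑ q ∈ t, (q.2 : ℝ) ^ s) (t : Finset (X × ℝ≥0)) (m : ℕ) :
    ∀ k : X × ℝ≥0 → ℕ, (∀ x, m ≤ ∑ q ∈ t, if dist x q.1 ≤ q.2 then k q else 0) →
      m * h ≤ ∑ q ∈ t, (k q : ℝ) * (q.2 : ℝ) ^ s := by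
  classical
  induction m with
  | zero =>
    intro k _
    simp only [Nat.cast_zero, zero_mul]
    positivity
  | succ m ih =>
    intro k hk
    let t' := t.filter (fun q => k q ≠ 0)
    obtain ⟨u, hut, hdisj, hcov⟩ := Vitali.exists_disjoint_subfamily_covering_enlargement_closedBall
      (t' : Set (X × ℝ≥0)) (fun q => q.1) (fun q => (q.2 : ℝ)) (∑ q ∈ t', (q.2 : ℝ))
      (fun q hq => Finset.single_le_sum (f := fun q : X × ℝ≥0 => (q.2 : ℝ))
        (fun _ _ => NNReal.coe_nonneg _) hq) 5 (by norm_num)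
    let k' : X × ℝ≥0 → ℕ := fun q => if q ∈ u then k q - 1 else k q
    have hkk : ∀ q ∈ t, k q = k' q + (if q ∈ u then 1 else 0) := by
      intro q hq
      by_cases hqu : q ∈ u
      · have := hut hqu
        have h2 : k q ≠ 0 := by simpa [t', hq] using this
        simp only [k', hqu, if_true]; omega
      · simp [k', hqu]
    have h1 : h ≤ ∑ q ∈ t.filter (· ∈ u), (q.2 : ℝ) ^ s := by
      apply H
      intro x
      have := hk x
      have hne : ∑ q ∈ t, (if dist x q.1 ≤ q.2 then k q else 0) ≠ 0 := by omega
      obtain ⟨q, hq, hq2⟩ := Finset.exists_ne_zero_of_sum_ne_zero hne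
      have hd : dist x q.1 ≤ q.2 := by
        by_contra hcon
        simp [hcon] at hq2
      rw [if_pos hd] at hq2
      obtain ⟨b, hb, hb2⟩ := hcov q (by simp [t', hq, hq2])
      have hbt := hut hb
      refine ⟨b, ?_, ?_⟩
      · simp only [Finset.mem_filter]
        refine ⟨?_, hb⟩
        have : b ∈ t' := hbt
        exact (Finset.mem_filter.1 this).1
      · exact hb2 (mem_closedBall.2 hd)
    have h2 : (m : ℝ) * h ≤ ∑ q ∈ t, (k' q : ℝ) * (q.2 : ℝ) ^ s := by
      apply ih
      intro x
      have hx := hk x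
      have e : ∑ q ∈ t, (if dist x q.1 ≤ q.2 then k q else 0)
          = ∑ q ∈ t, (if dist x q.1 ≤ q.2 then k' q else 0)
            + ∑ q ∈ t, (if dist x q.1 ≤ q.2 ∧ q ∈ u then 1 else 0) := by
        rw [← Finset.sum_add_distrib]
        refine Finset.sum_congr rfl fun q hq => ?_
        rw [hkk q hq]
        by_cases h1 : dist x q.1 ≤ q.2 <;> simp [h1]
      have e2 : ∑ q ∈ t, (if dist x q.1 ≤ q.2 ∧ q ∈ u then 1 else 0) ≤ 1 := by
        rw [← Finset.card_filter, Finset.card_le_one]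
        intro a ha b hb
        simp only [Finset.mem_filter] at ha hb
        by_contra hab
        exact Set.disjoint_left.1 (hdisj ha.2.2 hb.2.2 hab) (mem_closedBall.2 ha.2.1)
          (mem_closedBall.2 hb.2.1)
      omega
    have e : ∑ q ∈ t, (k q : ℝ) * (q.2 : ℝ) ^ s = ∑ q ∈ t, (k' q : ℝ) * (q.2 : ℝ) ^ s
        + ∑ q ∈ t.filter (· ∈ u), (q.2 : ℝ) ^ s := by
      rw [Finset.sum_filter, ← Finset.sum_add_distrib]
      refine Finset.sum_congr rfl fun q hq => ?_
      rw [hkk q hq]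
      by_cases h1 : q ∈ u <;> simp [h1]
      ring
    rw [e]
    push_cast
    linarith

lemma wc_real {X : Type*} [MetricSpace X] (s h : ℝ)
    (H : ∀ t : Finset (X × ℝ≥0), (∀ x, ∃ q ∈ t, dist x q.1 ≤ 5 * q.2) →
      h ≤ ∑ q ∈ t, (q.2 : ℝ) ^ s) (t : Finset (X × ℝ≥0)) (c : X × ℝ≥0 → ℝ≥0)
    (hc : ∀ x, (1 : ℝ) ≤ ∑ q ∈ t, if dist x q.1 ≤ q.2 then (c q : ℝ) else 0) :
      h ≤ ∑ q ∈ t, (c q : ℝ) * (q.2 : ℝ) ^ s := by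
  set A := ∑ q ∈ t, (c q : ℝ) * (q.2 : ℝ) ^ s with hA
  set B := ∑ q ∈ t, (q.2 : ℝ) ^ s with hB
  have key : ∀ N : ℕ, N * h ≤ N * A + B := by
    intro N
    refine (wc_nat s h H t N (fun q => ⌈(N : ℝ) * c q⌉₊) ?_).trans ?_
    · intro x
      have : (N : ℝ) ≤ ((∑ q ∈ t, if dist x q.1 ≤ q.2 then ⌈(N : ℝ) * c q⌉₊ else 0 : ℕ) : ℝ) := by
        calc (N : ℝ) = N * 1 := by ring
          _ ≤ N * ∑ q ∈ t, (if dist x q.1 ≤ q.2 then (c q : ℝ) else 0) := by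
            gcongr; exact hc x
          _ ≤ _ := by
            rw [Finset.mul_sum]
            push_cast
            refine Finset.sum_le_sum fun q _ => ?_
            split_ifs
            · exact Nat.le_ceil _
            · simp
      exact_mod_cast this
    · rw [hA, hB, Finset.mul_sum, ← Finset.sum_add_distrib]
      refine Finset.sum_le_sum fun q _ => ?_
      have h1 : ((⌈(N : ℝ) * c q⌉₊ : ℕ) : ℝ) ≤ N * c q + 1 :=
        (Nat.ceil_lt_add_one (by positivity)).le
      have h2 : (0 : ℝ) ≤ (q.2 : ℝ) ^ s := by positivity
      nlinarith [mul_le_mul_of_nonneg_right h1 h2]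
  by_contra hcon
  push Not at hcon
  obtain ⟨N, hN⟩ := exists_nat_gt (B / (h - A))
  rw [div_lt_iff₀ (by linarith)] at hN
  have := key N
  linarith

noncomputable def wcov {X : Type*} [MetricSpace X] (c : X × ℝ≥0 →₀ ℝ≥0) (x : X) : ℝ :=
  c.sum fun q w => if dist x q.1 ≤ q.2 then (w : ℝ) else 0

noncomputable def wcost {X : Type*} (s : ℝ) (c : X × ℝ≥0 →₀ ℝ≥0) : ℝ :=
  c.sum fun q w => (w : ℝ) * (q.2 : ℝ) ^ s

lemma wcov_add {X : Type*} [MetricSpace X] (c d : X × ℝ≥0 →₀ ℝ≥0) (x : X) :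
    wcov (c + d) x = wcov c x + wcov d x := by
  classical
  unfold wcov
  apply Finsupp.sum_add_index'
  · simp
  · intros; split_ifs <;> simp

lemma wcost_add {X : Type*} (s : ℝ) (c d : X × ℝ≥0 →₀ ℝ≥0) :
    wcost s (c + d) = wcost s c + wcost s d := by
  classical
  unfold wcost
  apply Finsupp.sum_add_index'
  · simp
  · intros; push_cast; ring

lemma wcov_smul {X : Type*} [MetricSpace X] (a : ℝ≥0) (c : X × ℝ≥0 →₀ ℝ≥0) (x : X) :
    wcov (a • c) x = a * wcov c x := by
  classical
  unfold wcov
  rw [Finsupp.sum_smul_index (by simp), Finsupp.mul_sum]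
  refine Finsupp.sum_congr fun q _ => ?_
  split_ifs <;> simp

lemma wcost_smul {X : Type*} (s : ℝ) (a : ℝ≥0) (c : X × ℝ≥0 →₀ ℝ≥0) :
    wcost s (a • c) = a * wcost s c := by
  classical
  unfold wcost
  rw [Finsupp.sum_smul_index (by simp), Finsupp.mul_sum]
  refine Finsupp.sum_congr fun q _ => ?_
  push_cast; ring

lemma wcost_nonneg {X : Type*} (s : ℝ) (c : X × ℝ≥0 →₀ ℝ≥0) : 0 ≤ wcost s c := by
  unfold wcost
  exact Finset.sum_nonneg fun q _ => by positivity

noncomputable def wp {X : Type*} [MetricSpace X] (s : ℝ) (f : X → ℝ) : ℝ :=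
  sInf (wcost s '' {c | ∀ x, f x ≤ wcov c x})

lemma wp_le {X : Type*} [MetricSpace X] (s : ℝ) (f : X → ℝ) (c : X × ℝ≥0 →₀ ℝ≥0)
    (hc : ∀ x, f x ≤ wcov c x) : wp s f ≤ wcost s c := by
  refine csInf_le ⟨0, ?_⟩ ⟨c, hc, rfl⟩
  rintro _ ⟨c, _, rfl⟩
  exact wcost_nonneg s c

lemma wp_single_le {X : Type*} [MetricSpace X] (s : ℝ) (f : X → ℝ) (x : X) (r : ℝ≥0)
    (hf1 : ∀ y, f y ≤ 1) (hf : ∀ y, r < dist y x → f y ≤ 0) : wp s f ≤ (r : ℝ) ^ s := by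
  refine (wp_le s f (Finsupp.single (x, r) 1) ?_).trans ?_
  · intro y
    simp only [wcov]
    rw [Finsupp.sum_single_index (by simp)]
    split_ifs with h
    · simpa using hf1 y
    · exact hf y (not_le.1 h)
  · simp only [wcost]
    rw [Finsupp.sum_single_index (by simp)]
    simp

lemma wp_nonneg {X : Type*} [MetricSpace X] (s : ℝ) (f : X → ℝ) : 0 ≤ wp s f := by
  apply Real.sInf_nonneg
  rintro _ ⟨c, _, rfl⟩
  exact wcost_nonneg s c

lemma wp_nonempty {X : Type*} [MetricSpace X] [CompactSpace X] [Nonempty X]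
    (s : ℝ) (f : X → ℝ) (hf : Continuous f) :
    (wcost s '' {c : X × ℝ≥0 →₀ ℝ≥0 | ∀ x, f x ≤ wcov c x}).Nonempty := by
  obtain ⟨x0⟩ := ‹Nonempty X›
  obtain ⟨M, hM⟩ := (isCompact_range hf).bddAbove
  refine ⟨_, Finsupp.single (x0, ⟨diam (Set.univ : Set X), diam_nonneg⟩) M.toNNReal, ?_, rfl⟩
  intro x
  simp only [wcov]
  rw [Finsupp.sum_single_index (by simp)]
  have : dist x x0 ≤ diam (Set.univ : Set X) :=
    dist_le_diam_of_mem isCompact_univ.isBounded (Set.mem_univ _) (Set.mem_univ _)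
  rw [if_pos (by exact this)]
  exact (hM ⟨x, rfl⟩).trans (Real.le_coe_toNNReal M)

lemma wp_add {X : Type*} [MetricSpace X] [CompactSpace X] [Nonempty X]
    (s : ℝ) (f g : X → ℝ) (hf : Continuous f) (hg : Continuous g) :
    wp s (f + g) ≤ wp s f + wp s g := by
  refine le_of_forall_pos_le_add fun ε hε => ?_
  obtain ⟨_, ⟨c, hc, rfl⟩, hc2⟩ := exists_lt_of_csInf_lt (wp_nonempty s f hf)
    (show wp s f < wp s f + ε / 2 by linarith)
  obtain ⟨_, ⟨d, hd, rfl⟩, hd2⟩ := exists_lt_of_csInf_lt (wp_nonempty s g hg)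
    (show wp s g < wp s g + ε / 2 by linarith)
  have := wp_le s (f + g) (c + d) (fun x => by
    rw [wcov_add]; exact add_le_add (hc x) (hd x))
  rw [wcost_add] at this
  linarith

lemma wp_smul_le {X : Type*} [MetricSpace X] [CompactSpace X] [Nonempty X]
    (s : ℝ) (f : X → ℝ) (hf : Continuous f) (a : ℝ) (ha : 0 < a) :
    wp s (a • f) ≤ a * wp s f := by
  rw [← div_le_iff₀' ha]
  refine le_csInf (wp_nonempty s f hf) ?_
  rintro _ ⟨c, hc, rfl⟩
  rw [div_le_iff₀' ha]
  have := wp_le s (a • f) ((NNReal.mk a ha.le) • c) (fun x => by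
    rw [wcov_smul]; exact mul_le_mul_of_nonneg_left (hc x) ha.le)
  rw [wcost_smul] at this
  exact this

lemma wp_smul {X : Type*} [MetricSpace X] [CompactSpace X] [Nonempty X]
    (s : ℝ) (f : X → ℝ) (hf : Continuous f) (a : ℝ) (ha : 0 < a) :
    wp s (a • f) = a * wp s f := by
  refine le_antisymm (wp_smul_le s f hf a ha) ?_
  have := wp_smul_le s (a • f) (hf.const_smul a) a⁻¹ (by positivity)
  rw [smul_smul, inv_mul_cancel₀ ha.ne', one_smul] at this
  calc a * wp s f ≤ a * (a⁻¹ * wp s (a • f)) := by gcongr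
    _ = _ := by field_simp

lemma frostman_aux {X : Type*} [MetricSpace X] [CompactSpace X] [Nonempty X] [MeasurableSpace X]
    [BorelSpace X] (s h : ℝ)
    (H : ∀ t : Finset (X × ℝ≥0), (∀ x, ∃ q ∈ t, dist x q.1 ≤ 5 * q.2) →
      h ≤ ∑ q ∈ t, (q.2 : ℝ) ^ s) :
    ∃ μ : Measure X, ENNReal.ofReal h ≤ μ Set.univ ∧ μ Set.univ ≠ ⊤ ∧
      ∀ (x : X) (r : ℝ), 0 < r → μ (closedBall x r) ≤ ENNReal.ofReal ((2 * r) ^ s) := by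
  let one : C_c(X, ℝ) := CompactlySupportedContinuousMap.continuousMapEquiv (ContinuousMap.const X 1)
  have one_apply : ∀ x, one x = 1 := fun x => rfl
  have one_ne : one ≠ 0 := by
    intro h0
    obtain ⟨x0⟩ := ‹Nonempty X›
    have := congrArg (fun f : C_c(X, ℝ) => f x0) h0
    simp [one_apply] at this
  let N : C_c(X, ℝ) → ℝ := fun f => wp s f
  obtain ⟨L, hL1, hL2⟩ := exists_extension_of_le_sublinear
    (LinearPMap.mkSpanSingleton (σ := RingHom.id ℝ) one (N one) one_ne) N
    (fun c hc f => wp_smul s f f.continuous c hc)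
    (fun f g => wp_add s f g f.continuous g.continuous)
    (by
      rintro ⟨x, hx⟩
      obtain ⟨a, rfl⟩ := Submodule.mem_span_singleton.1 hx
      rw [LinearPMap.mkSpanSingleton'_apply]
      simp only [RingHom.id_apply, smul_eq_mul]
      rcases lt_or_ge 0 a with ha | ha
      · exact (wp_smul s one one.continuous a ha).ge
      · exact (mul_nonpos_of_nonpos_of_nonneg ha (wp_nonneg _ _)).trans (wp_nonneg _ _))
  have hLone : L one = N one := by
    have := hL1 ⟨one, Submodule.mem_span_singleton_self one⟩
    exact this.trans (LinearPMap.mkSpanSingleton'_apply_self one (N one) _ _)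
  have hpos : ∀ f, 0 ≤ f → 0 ≤ L f := by
    intro f hf
    have h1 : L (-f) ≤ 0 := by
      refine (hL2 _).trans ((wp_le s _ 0 ?_).trans (by simp [wcost]))
      intro x
      have : (0 : ℝ) ≤ f x := hf x
      simpa [wcov] using this
    simpa using h1
  let Λ : C_c(X, ℝ) →ₚ[ℝ] ℝ := PositiveLinearMap.mk₀ L hpos
  have hΛ : ∀ f, Λ f = L f := fun f => rfl
  refine ⟨RealRMK.rieszMeasure Λ, ?_, ?_, ?_⟩
  · refine le_trans ?_ (RealRMK.le_rieszMeasure_tsupport_subset Λ (f := one) (V := Set.univ)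
      (fun x => by simp [one_apply]) (Set.subset_univ _))
    rw [hΛ, hLone]
    apply ENNReal.ofReal_le_ofReal
    refine le_csInf (wp_nonempty s one one.continuous) ?_
    rintro _ ⟨c, hc, rfl⟩
    exact wc_real s h H c.support c hc
  · refine ne_top_of_le_ne_top ENNReal.ofReal_ne_top (RealRMK.rieszMeasure_le_of_eq_one Λ (f := one)
      (fun x => by simp [one_apply]) isCompact_univ (fun x _ => rfl))
  · intro x r hr
    let b : C_c(X, ℝ) := CompactlySupportedContinuousMap.continuousMapEquiv
      ⟨fun y => max 0 (min 1 (2 - dist y x / r)), by fun_prop⟩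
    have hb : ∀ y, b y = max 0 (min 1 (2 - dist y x / r)) := fun y => rfl
    refine (RealRMK.rieszMeasure_le_of_eq_one Λ (f := b)
      (fun y => by rw [hb]; exact le_max_left _ _) isClosed_closedBall.isCompact ?_).trans ?_
    · intro y hy
      rw [hb]
      have : dist y x / r ≤ 1 := (div_le_one hr).2 hy
      rw [min_eq_left (by linarith), max_eq_right zero_le_one]
    · apply ENNReal.ofReal_le_ofReal
      rw [hΛ]
      refine (hL2 _).trans ?_
      have := wp_single_le s b x ⟨2 * r, by positivity⟩ (fun y => by
        rw [hb]; exact max_le zero_le_one (min_le_left _ _)) (fun y hy => by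
        rw [hb]
        refine max_le le_rfl ((min_le_right _ _).trans ?_)
        have : 2 * r < dist y x := hy
        have : 2 < dist y x / r := (lt_div_iff₀ hr).2 this
        linarith)
      exact this

lemma radial_lip {E : Type*} [NormedAddCommGroup E] [NormedSpace ℝ E] :
    LipschitzOnWith 2 (fun x : E => ‖x‖⁻¹ • x) {x | 1 ≤ ‖x‖} := by
  refine LipschitzOnWith.of_dist_le_mul fun x hx y hy => ?_
  have hx : 1 ≤ ‖x‖ := hx
  have hy : 1 ≤ ‖y‖ := hy
  rw [dist_eq_norm, dist_eq_norm]
  have e : ‖x‖⁻¹ • x - ‖y‖⁻¹ • y = ‖x‖⁻¹ • ((x - y) + ((‖y‖ - ‖x‖) * ‖y‖⁻¹) • y) := by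
    rw [smul_add, smul_smul, smul_sub]
    have : ‖x‖⁻¹ * ((‖y‖ - ‖x‖) * ‖y‖⁻¹) = ‖x‖⁻¹ - ‖y‖⁻¹ := by
      field_simp
    rw [this, sub_smul]
    abel
  rw [e, norm_smul]
  have h1 : ‖((‖y‖ - ‖x‖) * ‖y‖⁻¹) • y‖ ≤ ‖x - y‖ := by
    rw [norm_smul, norm_mul, norm_inv, norm_norm, mul_assoc, inv_mul_cancel₀ (by linarith), mul_one,
      norm_sub_rev x y]
    exact abs_norm_sub_norm_le y x
  have h2 : ‖(‖x‖⁻¹ : ℝ)‖ ≤ 1 := by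
    rw [norm_inv, norm_norm]
    exact inv_le_one_of_one_le₀ hx
  calc _ ≤ 1 * (‖x - y‖ + ‖x - y‖) := by
        gcongr
        exact (norm_add_le _ _).trans (by gcongr)
    _ = _ := by simp; ring

lemma sphere_finite (k : ℕ) :
    μH[(k : ℝ)] (sphere (0 : EuclideanSpace ℝ (Fin (k + 1))) 1) < ⊤ := by
  let g : Fin (k + 1) × ({1, -1} : Finset ℝ) → (Fin k → ℝ) → EuclideanSpace ℝ (Fin (k + 1)) :=
    fun p v => WithLp.toLp 2 (p.1.insertNth (α := fun _ => ℝ) (p.2 : ℝ) v)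
  have gapp1 : ∀ p v, g p v p.1 = p.2 := by intro p v; simp [g]
  have gapp2 : ∀ p v j, g p v (p.1.succAbove j) = v j := by intro p v j; simp [g]
  have hlip : ∀ p, ∃ K, LipschitzWith K (g p) := by
    intro p
    have h1 : LipschitzWith 1 (fun v : Fin k → ℝ => p.1.insertNth (α := fun _ => ℝ) (p.2 : ℝ) v) := by
      refine LipschitzWith.of_dist_le_mul fun v w => ?_
      rw [NNReal.coe_one, one_mul, dist_pi_le_iff dist_nonneg]
      intro j
      refine Fin.succAboveCases p.1 ?_ ?_ j
      · simp
      · intro j; simpa using dist_le_pi_dist v w j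
    exact ⟨_, (PiLp.lipschitzWith_toLp 2 (fun _ : Fin (k + 1) => ℝ)).comp h1⟩
  have hone : ∀ p : Fin (k + 1) × ({1, -1} : Finset ℝ), |(p.2 : ℝ)| = 1 := by
    rintro ⟨i, ε, hε⟩
    simp only [Finset.mem_insert, Finset.mem_singleton] at hε
    rcases hε with rfl | rfl <;> simp
  have hmaps : ∀ p, Set.MapsTo (g p) (closedBall 0 1) {x | 1 ≤ ‖x‖} := by
    intro p v _
    have := PiLp.norm_apply_le (g p v) p.1
    rw [gapp1, Real.norm_eq_abs, hone] at this
    exact this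
  have hsub : sphere (0 : EuclideanSpace ℝ (Fin (k + 1))) 1 ⊆
      ⋃ p, ((fun x => ‖x‖⁻¹ • x) ∘ g p) '' (closedBall 0 1) := by
    intro x hx
    have hx1 : ‖x‖ = 1 := by simpa using hx
    obtain ⟨i, hi⟩ := Finite.exists_max (fun i => |x i|)
    have hpos : 0 < |x i| := by
      rw [abs_pos]
      intro h0
      have : x = 0 := by
        ext j
        have := hi j
        rw [h0] at this
        simpa using this
      rw [this] at hx1
      simp at hx1
    have hε : x i / |x i| ∈ ({1, -1} : Finset ℝ) := by
      rcases abs_choice (x i) with h | h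
      · rw [h] at hpos ⊢; simp [hpos.ne']
      · have : x i ≠ 0 := abs_pos.1 hpos
        rw [h, div_neg, div_self this]; simp
    refine Set.mem_iUnion.2 ⟨(i, ⟨_, hε⟩), fun j => x (i.succAbove j) / |x i|, ?_, ?_⟩
    · rw [mem_closedBall_zero_iff, pi_norm_le_iff_of_nonneg zero_le_one]
      intro j
      rw [norm_div, Real.norm_eq_abs, Real.norm_eq_abs, abs_abs]
      exact (div_le_one hpos).2 (hi _)
    · have hg : g (i, ⟨_, hε⟩) (fun j => x (i.succAbove j) / |x i|) = (|x i|)⁻¹ • x := by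
        ext j
        refine Fin.succAboveCases i ?_ ?_ j
        · rw [gapp1 (i, ⟨_, hε⟩)]; simp [div_eq_inv_mul]
        · intro j; rw [gapp2 (i, ⟨_, hε⟩)]; simp [div_eq_inv_mul]
      simp only [Function.comp_apply, hg]
      rw [norm_smul, hx1, norm_inv, Real.norm_eq_abs, abs_abs, mul_one, inv_inv, smul_smul,
        mul_inv_cancel₀ hpos.ne', one_smul]
  refine (measure_mono hsub).trans_lt ((measure_iUnion_le _).trans_lt ?_)
  rw [tsum_fintype]
  refine ENNReal.sum_lt_top.2 fun p _ => ?_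
  obtain ⟨K, hK⟩ := hlip p
  refine ((radial_lip.comp hK.lipschitzOnWith (hmaps p)).hausdorffMeasure_image_le
    (Nat.cast_nonneg k)).trans_lt ?_
  have hv : μH[(k : ℝ)] (closedBall (0 : Fin k → ℝ) 1) = volume (closedBall (0 : Fin k → ℝ) 1) := by
    have := hausdorffMeasure_pi_real (ι := Fin k)
    rw [Fintype.card_fin] at this
    rw [this]
  rw [hv]
  exact ENNReal.mul_lt_top (ENNReal.rpow_lt_top_of_nonneg (Nat.cast_nonneg k) ENNReal.coe_ne_top)
    (isCompact_closedBall _ _).measure_lt_top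

lemma newtKernelConst_ne_top (n : ℕ) (hn : 3 ≤ n) : newtKernelConst n ≠ ⊤ := by
  obtain ⟨k, rfl⟩ : ∃ k, n = k + 1 := ⟨n - 1, by omega⟩
  unfold newtKernelConst
  refine ENNReal.mul_ne_top ?_ ?_
  · exact ne_top_of_le_ne_top (ENNReal.natCast_ne_top (k + 1)) tsub_le_self
  · have : ((k + 1 : ℕ) : ℝ) - 1 = k := by push_cast; ring
    rw [this]
    exact (sphere_finite k).ne

lemma potential_bound {X : Type*} [MetricSpace X] [MeasurableSpace X] [BorelSpace X]
    (ν : Measure X) [IsProbabilityMeasure ν] (x : X) (a s R : ℝ) (ha : 0 < a) (has : a < s)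
    (hR : 0 < R)
    (hν : ∀ r : ℝ, 0 < r → ν (closedBall x r) ≤ ENNReal.ofReal ((r / R) ^ s)) :
    ∫⁻ y, edist x y ^ (-a) ∂ν ≤
      ENNReal.ofReal ((1 + 2 ^ a * (1 - (1 / 2) ^ (s - a))⁻¹) * R ^ (-a)) := by
  have hs : 0 < s := ha.trans has
  have h0 : ν {x} = 0 := by
    have ht : Filter.Tendsto (fun r : ℝ => ENNReal.ofReal ((r / R) ^ s))
        (nhdsWithin 0 (Set.Ioi 0)) (nhds 0) := by
      have : ContinuousAt (fun r : ℝ => ENNReal.ofReal ((r / R) ^ s)) 0 := by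
        apply ENNReal.continuous_ofReal.continuousAt.comp
        exact ContinuousAt.rpow_const (by fun_prop) (Or.inr hs.le)
      have h2 := this.tendsto
      simp only [zero_div, Real.zero_rpow hs.ne', ENNReal.ofReal_zero] at h2
      exact h2.mono_left nhdsWithin_le_nhds
    refine le_antisymm (ge_of_tendsto ht ?_) (zero_le)
    filter_upwards [self_mem_nhdsWithin] with r hr
    refine (measure_mono ?_).trans (hν r hr)
    rw [Set.singleton_subset_iff]
    exact mem_closedBall_self (le_of_lt hr)
  have hae : ∀ᵐ y ∂ν, y ≠ x := by
    rw [ae_iff]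
    simpa using h0
  let c : ℕ → ℝ := fun k => ((1 / 2 : ℝ) ^ (k + 1) * R) ^ (-a)
  let ρ : ℕ → ℝ := fun k => (1 / 2 : ℝ) ^ k * R
  have hpt : ∀ᵐ y ∂ν, edist x y ^ (-a) ≤ ENNReal.ofReal (R ^ (-a)) +
      ∑' k, (closedBall x (ρ k)).indicator (fun _ => ENNReal.ofReal (c k)) y := by
    filter_upwards [hae] with y hy
    have hd : 0 < dist x y := dist_pos.2 hy.symm
    rw [edist_dist, ENNReal.ofReal_rpow_of_pos hd]
    rcases le_total R (dist x y) with h | h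
    · refine le_add_right (ENNReal.ofReal_le_ofReal ?_)
      exact Real.rpow_le_rpow_of_nonpos hR h (by linarith)
    · obtain ⟨k, hk1, hk2⟩ := exists_nat_pow_near_of_lt_one (x := dist x y / R) (y := (1 / 2 : ℝ))
        (by positivity) ((div_le_one hR).2 h) (by norm_num) (by norm_num)
      rw [lt_div_iff₀ hR] at hk1
      rw [div_le_iff₀ hR] at hk2
      refine le_add_left (le_trans ?_ (ENNReal.le_tsum k))
      rw [Set.indicator_of_mem (by rw [mem_closedBall, dist_comm]; exact hk2)]
      apply ENNReal.ofReal_le_ofReal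
      exact Real.rpow_le_rpow_of_nonpos (by positivity) hk1.le (by linarith)
  set q : ℝ := (1 / 2) ^ (s - a) with hq
  have hq0 : 0 ≤ q := by positivity
  have hq1 : q < 1 := Real.rpow_lt_one (by norm_num) (by norm_num) (by linarith)
  have hck : ∀ k, c k * (ρ k / R) ^ s = 2 ^ a * R ^ (-a) * q ^ k := by
    intro k
    have e1 : ρ k / R = (1 / 2) ^ k := by simp only [ρ]; field_simp
    have e2 : c k = (1 / 2 : ℝ) ^ (-a) * ((1 / 2 : ℝ) ^ k) ^ (-a) * R ^ (-a) := by
      simp only [c]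
      rw [Real.mul_rpow (by positivity) hR.le, pow_succ', Real.mul_rpow (by norm_num) (by positivity)]
    have e3 : (1 / 2 : ℝ) ^ (-a) = 2 ^ a := by
      rw [Real.rpow_neg (by norm_num), ← Real.inv_rpow (by norm_num)]; norm_num
    have e4 : q ^ k = ((1 / 2 : ℝ) ^ k) ^ (-a) * ((1 / 2 : ℝ) ^ k) ^ s := by
      rw [← Real.rpow_add (by positivity), hq, ← Real.rpow_natCast, ← Real.rpow_natCast,
        ← Real.rpow_mul (by norm_num), ← Real.rpow_mul (by norm_num)]
      congr 1; ring
    rw [e1, e2, e3, e4]; ring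
  calc ∫⁻ y, edist x y ^ (-a) ∂ν
      ≤ ∫⁻ y, (ENNReal.ofReal (R ^ (-a)) +
          ∑' k, (closedBall x (ρ k)).indicator (fun _ => ENNReal.ofReal (c k)) y) ∂ν :=
        lintegral_mono_ae hpt
    _ = ENNReal.ofReal (R ^ (-a)) + ∑' k, ENNReal.ofReal (c k) * ν (closedBall x (ρ k)) := by
        rw [lintegral_add_left measurable_const, lintegral_const, measure_univ, mul_one,
          lintegral_tsum (fun k => (measurable_const.indicator measurableSet_closedBall).aemeasurable)]
        congr 1
        refine tsum_congr fun k => ?_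
        rw [lintegral_indicator_const measurableSet_closedBall]
    _ ≤ ENNReal.ofReal (R ^ (-a)) + ∑' k, ENNReal.ofReal (2 ^ a * R ^ (-a) * q ^ k) := by
        gcongr with k
        rw [← hck k, ENNReal.ofReal_mul (by positivity)]
        gcongr
        exact hν _ (by positivity)
    _ = _ := by
        rw [← ENNReal.ofReal_tsum_of_nonneg (fun k => by positivity)
          ((summable_geometric_of_lt_one hq0 hq1).mul_left _), tsum_mul_left,
          tsum_geometric_of_lt_one hq0 hq1, ← ENNReal.ofReal_add (by positivity)
          (mul_nonneg (by positivity) (inv_nonneg.2 (by linarith)))]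
        congr 1; ring

lemma hContent_le_finset {X ι : Type*} [EMetricSpace X] (s : ℝ) (hs : 0 < s) (E : Set X)
    (t : Finset ι) (A : ι → Set X) (hE : E ⊆ ⋃ q ∈ t, A q) :
    hContent s E ≤ ∑ q ∈ t, ediam (A q) ^ s := by
  let f : ℕ → Set X := fun i => if h : i < t.card then A (t.equivFin.symm ⟨i, h⟩) else ∅
  have hf : E ⊆ ⋃ i, f i := by
    intro x hx
    obtain ⟨q, hq, hxq⟩ := Set.mem_iUnion₂.1 (hE hx)
    refine Set.mem_iUnion.2 ⟨t.equivFin ⟨q, hq⟩, ?_⟩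
    simp only [f, Fin.is_lt, dif_pos, Fin.eta, Equiv.symm_apply_apply]
    exact hxq
  refine (iInf₂_le f hf).trans (le_of_eq ?_)
  change ∑' i, ediam (f i) ^ s = _
  rw [tsum_eq_sum (s := Finset.range t.card), Finset.sum_range, ← Finset.sum_coe_sort t]
  · refine Fintype.sum_equiv t.equivFin.symm _ _ fun i => ?_
    simp [f]
  · intro i hi
    have : ¬ i < t.card := by simpa using hi
    simp [f, this, hs]

lemma frostman_prob {n : ℕ} (s : ℝ) (hs : 0 < s) (F : Set (EuclideanSpace ℝ (Fin n)))
    (hF : IsCompact F) (h0 : hContent s F ≠ 0) (hT : hContent s F ≠ ⊤) :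
    ∃ ν : Measure (EuclideanSpace ℝ (Fin n)), IsProbabilityMeasure ν ∧ ν Fᶜ = 0 ∧
      ∀ x ∈ F, ∀ r : ℝ, 0 < r → ν (closedBall x r) ≤
        ENNReal.ofReal ((r / ((hContent s F).toReal ^ (1 / s) / 20)) ^ s) := by
  set Hr := (hContent s F).toReal with hHr
  have hHpos : 0 < Hr := ENNReal.toReal_pos h0 hT
  have hFne : F.Nonempty := by
    by_contra hcon
    rw [Set.not_nonempty_iff_eq_empty] at hcon
    apply h0
    have := hContent_le_finset s hs F (∅ : Finset ℕ) (fun _ => ∅) (by simp [hcon])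
    simpa using this
  have : Nonempty F := hFne.to_subtype
  have : CompactSpace F := isCompact_iff_compactSpace.1 hF
  obtain ⟨μ, hμ1, hμ2, hμ3⟩ := frostman_aux (X := F) s (Hr / 10 ^ s) (by
    intro t ht
    have h1 := hContent_le_finset s hs F t
      (fun q => Subtype.val '' closedBall q.1 (5 * (q.2 : ℝ))) (by
        intro x hx
        obtain ⟨q, hq, hd⟩ := ht ⟨x, hx⟩
        exact Set.mem_iUnion₂.2 ⟨q, hq, ⟨x, hx⟩, hd, rfl⟩)
    have h2 : hContent s F ≤ ∑ q ∈ t, ENNReal.ofReal ((10 * (q.2 : ℝ)) ^ s) := by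
      refine h1.trans (Finset.sum_le_sum fun q _ => ?_)
      rw [← ENNReal.ofReal_rpow_of_nonneg (by positivity) hs.le]
      refine ENNReal.rpow_le_rpow (ediam_le ?_) hs.le
      rintro _ ⟨y, hy, rfl⟩ _ ⟨z, hz, rfl⟩
      rw [edist_dist]
      apply ENNReal.ofReal_le_ofReal
      have hy : dist y q.1 ≤ 5 * q.2 := hy
      have hz : dist z q.1 ≤ 5 * q.2 := hz
      have := dist_triangle_right y z q.1
      rw [← Subtype.dist_eq]
      linarith
    rw [← ENNReal.ofReal_sum_of_nonneg (fun q _ => by positivity)] at h2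
    have h3 := ENNReal.toReal_le_of_le_ofReal (Finset.sum_nonneg fun q _ => by positivity) h2
    rw [div_le_iff₀ (by positivity), Finset.sum_mul]
    refine h3.trans (le_of_eq (Finset.sum_congr rfl fun q _ => ?_))
    rw [Real.mul_rpow (by norm_num) (by positivity), mul_comm])
  have hM0 : μ Set.univ ≠ 0 := by
    intro h
    rw [h, nonpos_iff_eq_zero, ENNReal.ofReal_eq_zero] at hμ1
    have : 0 < Hr / 10 ^ s := by positivity
    linarith
  have hmeas : MeasurableEmbedding (Subtype.val : F → EuclideanSpace ℝ (Fin n)) :=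
    MeasurableEmbedding.subtype_coe hF.measurableSet
  refine ⟨(μ Set.univ)⁻¹ • μ.map Subtype.val, ⟨?_⟩, ?_, ?_⟩
  · rw [Measure.smul_apply, hmeas.map_apply, Set.preimage_univ, smul_eq_mul,
      ENNReal.inv_mul_cancel hM0 hμ2]
  · rw [Measure.smul_apply, hmeas.map_apply]
    have : (Subtype.val : F → EuclideanSpace ℝ (Fin n)) ⁻¹' Fᶜ = ∅ := by
      ext x; simp
    simp [this]
  · intro x hx r hr
    rw [Measure.smul_apply, hmeas.map_apply, smul_eq_mul]
    have e : (Subtype.val : F → EuclideanSpace ℝ (Fin n)) ⁻¹' closedBall x r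
        = closedBall ⟨x, hx⟩ r := rfl
    rw [e]
    calc _ ≤ (ENNReal.ofReal (Hr / 10 ^ s))⁻¹ * ENNReal.ofReal ((2 * r) ^ s) :=
          mul_le_mul' (ENNReal.inv_le_inv.2 hμ1) (hμ3 _ r hr)
      _ = _ := by
          rw [← ENNReal.ofReal_inv_of_pos (by positivity), ← ENNReal.ofReal_mul (by positivity)]
          congr 1
          have : r / (Hr ^ (1 / s) / 20) = (10 * (2 * r)) / Hr ^ (1 / s) := by
            field_simp; ring
          rw [this, Real.div_rpow (by positivity) (by positivity), ← Real.rpow_mul hHpos.le,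
            one_div_mul_cancel hs.ne', Real.rpow_one,
            Real.mul_rpow (x := 10) (y := 2 * r) (by norm_num) (by positivity)]
          rw [inv_div]
          ring

/-- for `n ≥ 3`, compact `F ⊂ ℝⁿ` and `n-2 < s ≤ n`,
`Cap_{n-2}(F) ≥ c(s,n) · (ℋ^s_∞(F))^{(n-2)/s}`. -/
theorem stmt_2 (n : ℕ) (hn : 3 ≤ n) (s : ℝ) (hs1 : (n : ℝ) - 2 < s) (hs2 : s ≤ n) :
    ∃ c : ℝ≥0∞, 0 < c ∧ c ≠ ⊤ ∧
      ∀ F : Set (EuclideanSpace ℝ (Fin n)), IsCompact F →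
        c * hContent s F ^ (((n : ℝ) - 2) / s) ≤ newtCap n F := by
  have hn' : (3 : ℝ) ≤ n := by exact_mod_cast hn
  set a : ℝ := (n : ℝ) - 2 with ha
  have ha0 : 0 < a := by rw [ha]; linarith
  have hs : 0 < s := ha0.trans hs1
  set κ := newtKernelConst n with hκ
  have hκT : κ ≠ ⊤ := newtKernelConst_ne_top n hn
  set C : ℝ := 1 + 2 ^ a * (1 - (1 / 2) ^ (s - a))⁻¹ with hC
  have hCpos : 0 < C := by
    have : (1 / 2 : ℝ) ^ (s - a) < 1 := Real.rpow_lt_one (by norm_num) (by norm_num) (by linarith)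
    have h2 : 0 < 1 - (1 / 2 : ℝ) ^ (s - a) := by linarith
    positivity
  set D : ℝ≥0∞ := ENNReal.ofReal (C * 20 ^ a) with hD
  have hD0 : D ≠ 0 := by
    rw [hD, Ne, ENNReal.ofReal_eq_zero, not_le]; positivity
  have hDT : D ≠ ⊤ := ENNReal.ofReal_ne_top
  refine ⟨((κ + 1) * D)⁻¹, ?_, ?_, ?_⟩
  · rw [ENNReal.inv_pos]
    exact ENNReal.mul_ne_top (ENNReal.add_ne_top.2 ⟨hκT, ENNReal.one_ne_top⟩) hDT
  · rw [Ne, ENNReal.inv_eq_top]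
    exact mul_ne_zero (by simp) hD0
  intro F hF
  by_cases h0 : hContent s F = 0
  · rw [h0, ENNReal.zero_rpow_of_pos (by positivity), mul_zero]
    exact zero_le
  have hT : hContent s F ≠ ⊤ := by
    have h1 := hContent_le_finset s hs F ({0} : Finset ℕ) (fun _ => F) (by simp)
    refine ne_top_of_le_ne_top ?_ h1
    simp only [Finset.sum_singleton]
    exact ENNReal.rpow_ne_top_of_nonneg hs.le hF.isBounded.ediam_ne_top
  obtain ⟨ν, hν1, hν2, hν3⟩ := frostman_prob s hs F hF h0 hT
  set Hr := (hContent s F).toReal with hHr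
  have hHpos : 0 < Hr := ENNReal.toReal_pos h0 hT
  have hHe : hContent s F ^ (a / s) = ENNReal.ofReal (Hr ^ (a / s)) := by
    rw [← ENNReal.ofReal_rpow_of_pos hHpos, hHr, ENNReal.ofReal_toReal hT]
  set Q := hContent s F ^ (a / s) with hQ
  have hQ0 : Q ≠ 0 := by
    rw [hHe, Ne, ENNReal.ofReal_eq_zero, not_le]; positivity
  have hQT : Q ≠ ⊤ := by rw [hHe]; exact ENNReal.ofReal_ne_top
  have hen : newtEnergy n ν ≤ (κ + 1) * D * Q⁻¹ := by
    unfold newtEnergy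
    have hae : ∀ᵐ x ∂ν, x ∈ F := by rw [ae_iff]; exact hν2
    calc _ ≤ ∫⁻ x, κ * (D * Q⁻¹) ∂ν := by
          refine lintegral_mono_ae ?_
          filter_upwards [hae] with x hx
          rw [lintegral_const_mul' _ _ hκT]
          gcongr
          refine (potential_bound ν x a s (Hr ^ (1 / s) / 20) ha0 hs1 (by positivity)
            (hν3 x hx)).trans (le_of_eq ?_)
          rw [hHe, ← ENNReal.ofReal_inv_of_pos (by positivity), hD,
            ← ENNReal.ofReal_mul (by positivity)]
          congr 1
          rw [← hC, Real.div_rpow (by positivity) (by norm_num), ← Real.rpow_mul hHpos.le,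
            Real.rpow_neg (by norm_num : (0 : ℝ) ≤ 20), ← Real.rpow_neg hHpos.le]
          have : 1 / s * -a = -(a / s) := by ring
          rw [this, div_inv_eq_mul]
          ring
      _ = κ * (D * Q⁻¹) := by rw [lintegral_const, measure_univ, mul_one]
      _ ≤ _ := by
          rw [mul_assoc]
          gcongr
          exact le_self_add
  unfold newtCap
  calc ((κ + 1) * D)⁻¹ * Q = ((κ + 1) * D * Q⁻¹)⁻¹ := by
        rw [ENNReal.mul_inv (Or.inr (ENNReal.inv_ne_top.2 hQ0)) (Or.inr (ENNReal.inv_ne_zero.2 hQT)),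
          inv_inv]
    _ ≤ _ := ENNReal.inv_le_inv.2 ((iInf_le_of_le ν (iInf_le_of_le hν1 (iInf_le _ hν2))).trans hen)
end

section
/- Let Ω ⊂ ℝ² be a bounded Wiener regular open set with Green function g and harmonic measure ω. Suppose B̄ is a closed ball centered at ∂Ω such that Cap_L((1/4)B̄ \ Ω) ≥ c₁ · Cap_L(B̄). Then g(z,y) ≤ C(c₁) · ω^z(8B̄) for all z ∈ Ω \ 2B̄ and y ∈ (1/5)B̄ ∩ Ω. -/
open MeasureTheory Metric
open scoped ENNReal Classical

/-- The logarithmic energy `∬ log(1/|x-y|) dμ dμ` (positive part minus negative part). -/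
noncomputable def logEnergy (μ : Measure (EuclideanSpace ℝ (Fin 2))) : EReal :=
  ((∫⁻ p : EuclideanSpace ℝ (Fin 2) × EuclideanSpace ℝ (Fin 2),
      (if p.1 = p.2 then ⊤ else ENNReal.ofReal (Real.log (1 / dist p.1 p.2)))
      ∂(μ.prod μ) : ℝ≥0∞) : EReal)
  - ((∫⁻ p : EuclideanSpace ℝ (Fin 2) × EuclideanSpace ℝ (Fin 2),
      ENNReal.ofReal (Real.log (dist p.1 p.2)) ∂(μ.prod μ) : ℝ≥0∞) : EReal)

/-- Robin constant `V(F) = inf_{μ ∈ M₁(F)} ∬ log(1/|x-y|) dμ dμ = 2π / Cap₀(F)`. -/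
noncomputable def wienerV (F : Set (EuclideanSpace ℝ (Fin 2))) : EReal :=
  ⨅ (μ : Measure (EuclideanSpace ℝ (Fin 2))) (_ : IsProbabilityMeasure μ) (_ : μ Fᶜ = 0),
    logEnergy μ

/-- Logarithmic capacity `Cap_L(F) = exp(−2π/Cap₀(F)) = exp(−V(F))`. -/
noncomputable def logCap (F : Set (EuclideanSpace ℝ (Fin 2))) : ℝ :=
  if wienerV F = ⊤ then 0 else Real.exp (-(wienerV F).toReal)

/-- A continuous function is harmonic on an open set iff it satisfies the mean value
property over balls; we take this as the definition of harmonicity. -/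
def HarmonicOnSet (f : EuclideanSpace ℝ (Fin 2) → ℝ) (U : Set (EuclideanSpace ℝ (Fin 2))) :
    Prop :=
  ContinuousOn f U ∧
    ∀ z ∈ U, ∀ ρ > (0 : ℝ), closedBall z ρ ⊆ U →
      f z = (volume (ball z ρ)).toReal⁻¹ * ∫ y in ball z ρ, f y

/-- `ω` is the harmonic measure of the bounded open set `Ω`, and `Ω` is Wiener regular:
for `z ∈ Ω`, `ω z` is a probability measure on `∂Ω`, and for every continuous `f` the
harmonic extension `z ↦ ∫ f dω^z` is harmonic in `Ω` and attains the boundary values `f`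
continuously at every boundary point. -/
def IsHarmonicMeasureOfWienerRegular (Ω : Set (EuclideanSpace ℝ (Fin 2)))
    (ω : EuclideanSpace ℝ (Fin 2) → Measure (EuclideanSpace ℝ (Fin 2))) : Prop :=
  (∀ z ∈ Ω, IsProbabilityMeasure (ω z)) ∧
  (∀ z ∈ Ω, ω z (frontier Ω)ᶜ = 0) ∧
  (∀ f : EuclideanSpace ℝ (Fin 2) → ℝ, Continuous f →
    HarmonicOnSet (fun z => ∫ ξ, f ξ ∂(ω z)) Ω ∧
    ∀ ξ₀ ∈ frontier Ω, Filter.Tendsto (fun z => ∫ ξ, f ξ ∂(ω z))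
      (nhdsWithin ξ₀ Ω) (nhds (f ξ₀)))

/-- The fundamental solution `𝓔₂(x-y) = (1/2π) log(1/|x-y|)` of `-Δ` in `ℝ²`. -/
noncomputable def fund (x y : EuclideanSpace ℝ (Fin 2)) : ℝ :=
  (1 / (2 * Real.pi)) * Real.log (1 / dist x y)

/-- The Green function of `Ω`, expressed via harmonic measure:
`g(z,y) = 𝓔₂(z−y) − ∫ 𝓔₂(ξ−y) dω^z(ξ)`. -/
noncomputable def green (ω : EuclideanSpace ℝ (Fin 2) → Measure (EuclideanSpace ℝ (Fin 2)))
    (z y : EuclideanSpace ℝ (Fin 2)) : ℝ :=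
  fund z y - ∫ ξ, fund ξ y ∂(ω z)


namespace Aux15

local notation "E2" => EuclideanSpace ℝ (Fin 2)

open Real in
lemma circ_zero (a c : ℂ) (r : ℝ) (hr : 0 < r) (h : r < ‖c - a‖) :
    ∫ θ in Set.Ioo (-π) π, (Real.log ‖circleMap c r θ - a‖ - Real.log ‖c - a‖) = 0 := by
  have h1 := circleAverage_log_norm_sub_const_eq_log_radius_add_posLog (a := a) (c := c) hr.ne'
  have h2 : Real.log r + Real.posLog (r⁻¹ * ‖c - a‖) = Real.log ‖c - a‖ := by
    rw [Real.posLog_eq_log, Real.log_mul (by positivity) (by linarith), Real.log_inv]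
    · ring
    · rw [abs_of_nonneg (by positivity)]
      rw [inv_mul_eq_div, one_le_div hr]; exact h.le
  rw [h2, Real.circleAverage_def] at h1
  have hper : Function.Periodic (fun θ => Real.log ‖circleMap c r θ - a‖) (2 * π) :=
    fun x => by simp [periodic_circleMap c r x]
  have h3 := hper.intervalIntegral_add_eq 0 (-π)
  rw [zero_add] at h3
  have h4 : -π + 2 * π = π := by ring
  rw [h4] at h3
  rw [h3] at h1
  have hcont : Continuous (fun θ => Real.log ‖circleMap c r θ - a‖) := by
    apply Continuous.log
    · have := continuous_circleMap c r
      fun_prop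
    · intro θ h0
      have : circleMap c r θ = a := by simpa [sub_eq_zero] using h0
      have h5 : ‖c - a‖ = r := by
        rw [← this]; simp [circleMap, abs_of_pos hr]
      linarith
  rw [← integral_Ioc_eq_integral_Ioo, ← intervalIntegral.integral_of_le (by linarith [pi_pos]),
    intervalIntegral.integral_sub (hcont.intervalIntegrable _ _) (by simp)]
  rw [intervalIntegral.integral_const]
  simp only [smul_eq_mul] at h1 ⊢
  have : (∫ (θ : ℝ) in -π..π, Real.log ‖circleMap c r θ - a‖) = 2 * π * Real.log ‖c - a‖ := by
    rw [← h1]; field_simp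
  rw [this]; ring

open Real in
lemma mvp_complex (a c : ℂ) (ρ : ℝ) (hρ : 0 < ρ) (h : ρ < ‖c - a‖) :
    ∫ w in ball (0 : ℂ) ρ, (Real.log ‖c + w - a‖ - Real.log ‖c - a‖) = 0 := by
  rw [← integral_indicator measurableSet_ball, ← Complex.integral_comp_polarCoord_symm]
  set f : ℂ → ℝ := fun w => Real.log ‖c + w - a‖ - Real.log ‖c - a‖ with hf
  have hz : ∀ p : ℝ × ℝ, c + Complex.polarCoord.symm p = circleMap c p.1 p.2 := by
    intro p
    simp [circleMap, Complex.polarCoord_symm_apply, Complex.exp_mul_I]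
  have hpc : Continuous (fun p : ℝ × ℝ => Complex.polarCoord.symm p) := by
    have : (fun p : ℝ × ℝ => Complex.polarCoord.symm p)
      = fun p : ℝ × ℝ => (p.1 : ℂ) * (Real.cos p.2 + Real.sin p.2 * Complex.I) := by
      ext p; rw [Complex.polarCoord_symm_apply]
    rw [this]
    fun_prop
  have hintgr : IntegrableOn (fun p : ℝ × ℝ =>
      p.1 • (ball (0 : ℂ) ρ).indicator f (Complex.polarCoord.symm p)) polarCoord.target := by
    have h1 : IntegrableOn (fun p : ℝ × ℝ =>
      p.1 • (ball (0 : ℂ) ρ).indicator f (Complex.polarCoord.symm p))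
        (Set.Ioo 0 ρ ×ˢ Set.Ioo (-π) π) := by
      have h2 : IntegrableOn (fun p : ℝ × ℝ => p.1 • f (Complex.polarCoord.symm p))
        (Set.Icc 0 ρ ×ˢ Set.Icc (-π) π) := by
        apply ContinuousOn.integrableOn_compact (isCompact_Icc.prod isCompact_Icc)
        apply ContinuousOn.smul continuousOn_fst
        apply ContinuousOn.sub _ continuousOn_const
        apply ContinuousOn.log
        · apply Continuous.continuousOn
          fun_prop
        · rintro p ⟨hp1, hp2⟩ h0
          have h3 : c + Complex.polarCoord.symm p = a := by simpa [sub_eq_zero] using h0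
          have h4 : ‖c - a‖ = p.1 := by
            rw [← h3]; simp only [sub_add_cancel_left, norm_neg, Complex.norm_polarCoord_symm]
            exact abs_of_nonneg hp1.1
          linarith [hp1.2]
      have h3 := h2.mono_set (Set.prod_mono Set.Ioo_subset_Icc_self Set.Ioo_subset_Icc_self :
        Set.Ioo 0 ρ ×ˢ Set.Ioo (-π) π ⊆ Set.Icc 0 ρ ×ˢ Set.Icc (-π) π)
      refine h3.congr_fun ?_ (measurableSet_Ioo.prod measurableSet_Ioo)
      rintro p ⟨hp1, hp2⟩
      have : Complex.polarCoord.symm p ∈ ball (0 : ℂ) ρ := by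
        rw [mem_ball_zero_iff, Complex.norm_polarCoord_symm, abs_of_pos hp1.1]; exact hp1.2
      simp only [Set.indicator_of_mem this]
    refine h1.of_forall_sdiff_eq_zero ?_ ?_
    · rw [polarCoord_target]; exact measurableSet_Ioi.prod measurableSet_Ioo
    · rintro p ⟨hp1, hp2⟩
      rw [polarCoord_target] at hp1
      have : Complex.polarCoord.symm p ∉ ball (0 : ℂ) ρ := by
        intro h5
        rw [mem_ball_zero_iff, Complex.norm_polarCoord_symm, abs_of_pos hp1.1] at h5
        exact hp2 ⟨⟨hp1.1, h5⟩, hp1.2⟩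
      simp only [Set.indicator_of_notMem this, smul_zero]
  rw [polarCoord_target] at hintgr ⊢
  rw [Measure.volume_eq_prod] at hintgr ⊢
  rw [setIntegral_prod _ hintgr]
  apply setIntegral_eq_zero_of_forall_eq_zero
  intro r hr
  have hr : 0 < r := hr
  by_cases hrρ : r < ρ
  · have : ∀ θ, (ball (0 : ℂ) ρ).indicator f (Complex.polarCoord.symm (r, θ)) =
        Real.log ‖circleMap c r θ - a‖ - Real.log ‖c - a‖ := by
      intro θ
      rw [Set.indicator_of_mem]
      · simp only [hf, hz]
      · rw [mem_ball_zero_iff, Complex.norm_polarCoord_symm, abs_of_pos hr]; exact hrρ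
    simp only [this, smul_eq_mul]
    rw [integral_const_mul, circ_zero a c r hr (by linarith), mul_zero]
  · apply setIntegral_eq_zero_of_forall_eq_zero
    intro θ _
    rw [Set.indicator_of_notMem, smul_zero]
    rw [mem_ball_zero_iff, Complex.norm_polarCoord_symm, abs_of_pos hr]; exact hrρ

lemma log_cont_on (x : E2) (R : ℝ) : ContinuousOn (fun w : E2 => Real.log (R / dist w x)) {x}ᶜ := by
  rcases eq_or_ne R 0 with rfl | hR
  · simpa using continuousOn_const
  apply ContinuousOn.log
  · apply ContinuousOn.div continuousOn_const (by fun_prop)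
    intro w hw; exact dist_ne_zero.2 hw
  · intro w hw; exact div_ne_zero hR (dist_ne_zero.2 hw)

lemma mvp_log (x z : E2) (R ρ : ℝ) (hR : 0 < R) (hρ : 0 < ρ) (h : ρ < dist z x) :
    ∫ w in ball z ρ, Real.log (R / dist w x) =
      (volume (ball z ρ)).toReal * Real.log (R / dist z x) := by
  set e := Complex.orthonormalBasisOneI.repr with he
  have hmp := e.measurePreserving
  have h1 := mvp_complex (e.symm x) (e.symm z) ρ hρ (by
    rw [← map_sub, LinearIsometryEquiv.norm_map, ← dist_eq_norm]; exact h)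
  have h2 : ∫ w in ball (0 : E2) ρ, (Real.log (dist (z + w) x) - Real.log (dist z x)) = 0 := by
    rw [← h1, ← hmp.setIntegral_preimage_emb e.toHomeomorph.measurableEmbedding]
    have : e ⁻¹' ball (0 : E2) ρ = ball 0 ρ := by ext w; simp
    rw [this]
    apply setIntegral_congr_fun measurableSet_ball
    intro w _
    have h3 : e.symm z + w - e.symm x = e.symm (z + e w - x) := by simp
    simp only [dist_eq_norm, h3, ← map_sub, LinearIsometryEquiv.norm_map]
  have h4 : ∫ w in ball z ρ, (Real.log (dist w x) - Real.log (dist z x)) = 0 := by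
    rw [← h2, ← (measurePreserving_add_left volume z).setIntegral_preimage_emb
      (measurableEmbedding_addLeft z)]
    congr 2
    · ext w; simp
  have hsub : closedBall z ρ ⊆ {x}ᶜ := by
    intro w hw hwx
    rw [Set.mem_singleton_iff] at hwx; subst hwx
    rw [mem_closedBall, dist_comm] at hw; linarith
  have hi : IntegrableOn (fun w : E2 => Real.log (R / dist w x)) (ball z ρ) :=
    (((log_cont_on x R).mono hsub).integrableOn_compact (isCompact_closedBall z ρ)).mono_set
      ball_subset_closedBall
  have hfin : volume (ball z ρ) ≠ ⊤ := measure_ball_lt_top.ne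
  have hzx : z ≠ x := by rintro rfl; simp at h; linarith
  have h5 : ∫ w in ball z ρ, (Real.log (R / dist z x) - Real.log (R / dist w x)) = 0 := by
    rw [← h4]
    apply setIntegral_congr_fun measurableSet_ball
    intro w hw
    have hwx : w ≠ x := hsub (ball_subset_closedBall hw)
    simp only
    rw [Real.log_div hR.ne' (dist_ne_zero.2 hwx), Real.log_div hR.ne' (dist_ne_zero.2 hzx)]
    ring
  rw [integral_sub ((integrableOn_const hfin).integrable) hi, setIntegral_const] at h5
  simp only [smul_eq_mul, Measure.real] at h5
  linarith


lemma harm_int {f : E2 → ℝ} {U : Set E2} (hf : ContinuousOn f U) {z : E2} {ρ : ℝ}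
    (h : closedBall z ρ ⊆ U) : IntegrableOn f (ball z ρ) :=
  ((hf.mono h).integrableOn_compact (isCompact_closedBall z ρ)).mono_set ball_subset_closedBall

lemma vol_pos (z : E2) {ρ : ℝ} (hρ : 0 < ρ) : 0 < (volume (ball z ρ)).toReal :=
  ENNReal.toReal_pos (measure_ball_pos _ _ hρ).ne' measure_ball_lt_top.ne

lemma harm_add {f g : E2 → ℝ} {U : Set E2} (hf : HarmonicOnSet f U) (hg : HarmonicOnSet g U) :
    HarmonicOnSet (fun z => f z + g z) U := by
  refine ⟨hf.1.add hg.1, fun z hz ρ hρ h => ?_⟩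
  rw [integral_add (harm_int hf.1 h) (harm_int hg.1 h), mul_add, ← hf.2 z hz ρ hρ h,
    ← hg.2 z hz ρ hρ h]

lemma harm_mul {f : E2 → ℝ} {U : Set E2} (c : ℝ) (hf : HarmonicOnSet f U) :
    HarmonicOnSet (fun z => c * f z) U := by
  refine ⟨continuousOn_const.mul hf.1, fun z hz ρ hρ h => ?_⟩
  rw [integral_const_mul, mul_left_comm, ← hf.2 z hz ρ hρ h]

lemma harm_const {U : Set E2} (c : ℝ) : HarmonicOnSet (fun _ => c) U := by
  refine ⟨continuousOn_const, fun z hz ρ hρ h => ?_⟩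
  rw [setIntegral_const]
  simp only [smul_eq_mul, Measure.real]
  have := vol_pos z hρ
  field_simp

lemma harm_sub {f g : E2 → ℝ} {U : Set E2} (hf : HarmonicOnSet f U) (hg : HarmonicOnSet g U) :
    HarmonicOnSet (fun z => f z - g z) U := by
  have := harm_add hf (harm_mul (-1) hg)
  convert this using 2
  ring

lemma harm_mono {f : E2 → ℝ} {U W : Set E2} (hf : HarmonicOnSet f U) (h : W ⊆ U) :
    HarmonicOnSet f W :=
  ⟨hf.1.mono h, fun z hz ρ hρ hb => hf.2 z (h hz) ρ hρ (hb.trans h)⟩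

lemma harm_congr {f g : E2 → ℝ} {U : Set E2} (hf : HarmonicOnSet f U) (h : Set.EqOn g f U) :
    HarmonicOnSet g U := by
  refine ⟨hf.1.congr h, fun z hz ρ hρ hb => ?_⟩
  rw [h hz, hf.2 z hz ρ hρ hb]
  congr 1
  exact setIntegral_congr_fun measurableSet_ball
    (fun w hw => (h (hb (ball_subset_closedBall hw))).symm)

lemma harm_log (x : E2) (R : ℝ) (hR : 0 < R) (U : Set E2) (hx : x ∉ U) :
    HarmonicOnSet (fun w => Real.log (R / dist w x)) U := by
  refine ⟨(log_cont_on x R).mono (fun w hw h => hx (by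
    rw [Set.mem_singleton_iff] at h; exact h ▸ hw)), fun z hz ρ hρ hb => ?_⟩
  have h : ρ < dist z x := by
    by_contra! hc
    exact hx (hb (by rw [mem_closedBall, dist_comm]; exact hc))
  rw [mvp_log x z R ρ hR hρ h]
  have := vol_pos z hρ
  field_simp

/-- minimum principle -/
lemma min_principle {v : E2 → ℝ} {W : Set E2} (hW : IsOpen W) (hb : Bornology.IsBounded W)
    (hv : HarmonicOnSet v W)
    (hbd : ∀ ξ ∈ frontier W, ∀ ε > 0, ∀ᶠ z in nhdsWithin ξ W, -ε ≤ v z) :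
    ∀ z ∈ W, 0 ≤ v z := by
  intro z₁ hz₁
  by_contra! hneg
  -- the sublevel set is compact
  have hcomp : ∀ m < 0, IsCompact {z ∈ W | v z ≤ m} := by
    intro m hm
    have hbnd : Bornology.IsBounded {z ∈ W | v z ≤ m} := hb.subset (fun z hz => hz.1)
    refine Metric.isCompact_of_isClosed_isBounded ?_ hbnd
    rw [← closure_subset_iff_isClosed]
    intro ξ hξ
    have hξW : ξ ∈ closure W := closure_mono (fun z hz => hz.1) hξ
    by_cases hmem : ξ ∈ W
    · refine ⟨hmem, ?_⟩
      have hc : ContinuousAt v ξ := hv.1.continuousAt (hW.mem_nhds hmem)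
      by_contra! hlt
      have h1 : ∀ᶠ z in nhds ξ, m < v z := hc.eventually_const_lt hlt
      obtain ⟨z, hz1, hz2⟩ := ((mem_closure_iff_frequently.1 hξ).and_eventually h1).exists
      exact absurd hz1.2 (not_le.2 hz2)
    · exfalso
      have hfr : ξ ∈ frontier W := by
        rw [hW.frontier_eq]; exact ⟨hξW, hmem⟩
      have h1 := hbd ξ hfr (-m / 2) (by linarith)
      rw [eventually_nhdsWithin_iff] at h1
      obtain ⟨z, hz1, hz2⟩ := ((mem_closure_iff_frequently.1 hξ).and_eventually h1).exists
      have := hz2 hz1.1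
      have := hz1.2
      linarith
  have hK := hcomp (v z₁) hneg
  obtain ⟨z₀, hz₀, hmin⟩ := hK.exists_isMinOn ⟨z₁, hz₁, le_rfl⟩
    (hv.1.mono (fun z hz => hz.1))
  have hmin' : ∀ z ∈ W, v z₀ ≤ v z := by
    intro z hz
    by_cases h : v z ≤ v z₁
    · exact hmin (show z ∈ {z ∈ W | v z ≤ v z₁} from ⟨hz, h⟩)
    · exact hz₀.2.trans (not_le.1 h).le
  have hK0 := hcomp (v z₀) (hz₀.2.trans_lt hneg)
  obtain ⟨z₂, hz₂, hmax⟩ := hK0.exists_isMaxOn ⟨z₀, hz₀.1, le_rfl⟩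
    (f := fun z : E2 => z 0) (by fun_prop)
  have hz₂v : v z₂ = v z₀ := le_antisymm hz₂.2 (hmin' _ hz₂.1)
  obtain ⟨ρ, hρ, hball⟩ := Metric.nhds_basis_closedBall.mem_iff.1 (hW.mem_nhds hz₂.1)
  have hmv := hv.2 z₂ hz₂.1 ρ hρ hball
  have hvp := vol_pos z₂ hρ
  have hintgr := harm_int hv.1 hball
  have hzero : ∫ y in ball z₂ ρ, (v y - v z₀) = 0 := by
    rw [integral_sub hintgr ((integrableOn_const measure_ball_lt_top.ne).integrable),
      setIntegral_const]
    simp only [smul_eq_mul, Measure.real]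
    rw [hz₂v] at hmv
    have h3 : (volume (ball z₂ ρ)).toReal * v z₀ = ∫ y in ball z₂ ρ, v y := by
      rw [hmv]; field_simp
    linarith
  have hae : (fun y => v y - v z₀) =ᵐ[volume.restrict (ball z₂ ρ)] 0 := by
    refine (setIntegral_eq_zero_iff_of_nonneg_ae ?_
      (hintgr.sub ((integrableOn_const measure_ball_lt_top.ne)))).1 hzero
    · filter_upwards [ae_restrict_mem measurableSet_ball] with y hy
      exact sub_nonneg.2 (hmin' y (hball (ball_subset_closedBall hy)))
  have heq : Set.EqOn (fun y => v y - v z₀) 0 (ball z₂ ρ) := by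
    refine Measure.eqOn_open_of_ae_eq hae isOpen_ball ?_ continuousOn_const
    exact (hv.1.mono (ball_subset_closedBall.trans hball)).sub continuousOn_const
  set p : E2 := z₂ + EuclideanSpace.single 0 (ρ / 2) with hp
  have hpb : p ∈ ball z₂ ρ := by
    rw [mem_ball, dist_eq_norm, hp, add_sub_cancel_left, PiLp.norm_single,
      Real.norm_eq_abs, abs_of_pos (by linarith)]
    linarith
  have h4 : v p - v z₀ = 0 := heq hpb
  have h5 : p 0 ≤ z₂ 0 :=
    hmax (show p ∈ {z ∈ W | v z ≤ v z₀} from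
      ⟨hball (ball_subset_closedBall hpb), by linarith⟩)
  have h6 : p 0 = z₂ 0 + ρ / 2 := by simp [hp]
  linarith

/-- potential of a measure carried by a compact set disjoint from `U` is harmonic in `U` -/
lemma harm_pot (ν : Measure E2) [IsProbabilityMeasure ν] (F U : Set E2) (hF : IsCompact F)
    (hU : IsOpen U) (hFU : Disjoint F U) (hν : ν Fᶜ = 0) (R : ℝ) (hR : 0 < R) :
    HarmonicOnSet (fun z => ∫ x, Real.log (R / dist z x) ∂ν) U ∧
      ∀ z ∈ U, Integrable (fun x => Real.log (R / dist z x)) ν := by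
  have hmem : ∀ᵐ x ∂ν, x ∈ F := by
    rw [ae_iff]; exact hν
  have hmeas : Measurable (fun p : E2 × E2 => Real.log (R / dist p.1 p.2)) := by fun_prop
  -- joint bound on compact sets
  have hbound : ∀ K : Set E2, IsCompact K → K ⊆ U →
      ∃ M : ℝ, ∀ z ∈ K, ∀ x ∈ F, ‖Real.log (R / dist z x)‖ ≤ M := by
    intro K hK hKU
    have hc : ContinuousOn (fun p : E2 × E2 => Real.log (R / dist p.1 p.2)) (K ×ˢ F) := by
      have hne : ∀ p ∈ K ×ˢ F, dist p.1 p.2 ≠ 0 := by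
        rintro ⟨z, x⟩ ⟨hz, hx⟩ h0
        rw [dist_eq_zero] at h0
        simp only at h0 hz hx
        subst h0
        exact Set.disjoint_left.1 hFU hx (hKU hz)
      apply ContinuousOn.log
      · exact continuousOn_const.div (by fun_prop) hne
      · intro p hp; exact div_ne_zero hR.ne' (hne p hp)
    obtain ⟨M, hM⟩ := (hK.prod hF).exists_bound_of_continuousOn hc
    exact ⟨M, fun z hz x hx => hM (z, x) ⟨hz, hx⟩⟩
  have hintgr : ∀ z ∈ U, Integrable (fun x => Real.log (R / dist z x)) ν := by
    intro z hz
    obtain ⟨M, hM⟩ := hbound {z} isCompact_singleton (by simpa using hz)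
    refine Integrable.of_bound (C := M)
      (by
          have : Measurable (fun x => Real.log (R / dist z x)) := by fun_prop
          exact this.aestronglyMeasurable) ?_
    filter_upwards [hmem] with x hx using hM z rfl x hx
  refine ⟨⟨?_, ?_⟩, hintgr⟩
  · intro z hz
    apply ContinuousAt.continuousWithinAt
    obtain ⟨ρ, hρ, hball⟩ := Metric.nhds_basis_closedBall.mem_iff.1 (hU.mem_nhds hz)
    obtain ⟨M, hM⟩ := hbound _ (isCompact_closedBall z ρ) hball
    refine continuousAt_of_dominated (bound := fun _ => M) ?_ ?_ (integrable_const M) ?_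
    · exact Filter.Eventually.of_forall (fun w => (by
        have : Measurable (fun x => Real.log (R / dist w x)) := by fun_prop
        exact this.aestronglyMeasurable))
    · filter_upwards [closedBall_mem_nhds z hρ] with w hw
      filter_upwards [hmem] with x hx using hM w hw x hx
    · filter_upwards [hmem] with x hx
      have hzx : z ∈ ({x}ᶜ : Set E2) := by
        rintro rfl; exact Set.disjoint_left.1 hFU hx hz
      exact (log_cont_on x R).continuousAt (isOpen_compl_singleton.mem_nhds hzx)
  · intro z hz ρ hρ hball
    obtain ⟨M, hM⟩ := hbound _ (isCompact_closedBall z ρ) hball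
    have : IsFiniteMeasure (volume.restrict (ball z ρ)) := ⟨by
      rw [Measure.restrict_apply_univ]; exact measure_ball_lt_top⟩
    have hI : Integrable (Function.uncurry fun w x => Real.log (R / dist w x))
        ((volume.restrict (ball z ρ)).prod ν) := by
      refine Integrable.of_bound (C := M) hmeas.aestronglyMeasurable ?_
      have h1 : ∀ᵐ p ∂((volume.restrict (ball z ρ)).prod ν), p.1 ∈ ball z ρ :=
        Measure.quasiMeasurePreserving_fst.ae (ae_restrict_mem measurableSet_ball)
      have h2 : ∀ᵐ p ∂((volume.restrict (ball z ρ)).prod ν), p.2 ∈ F :=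
        Measure.quasiMeasurePreserving_snd.ae hmem
      filter_upwards [h1, h2] with p hp1 hp2
      exact hM p.1 (ball_subset_closedBall hp1) p.2 hp2
    rw [integral_integral_swap hI, ← integral_const_mul]
    apply integral_congr_ae
    filter_upwards [hmem] with x hx
    exact (harm_log x R hR U (fun h => Set.disjoint_left.1 hFU hx h)).2 z hz ρ hρ hball


lemma int_cont_frontier {Ω : Set E2} (hb : Bornology.IsBounded Ω) (μ : Measure E2)
    [IsProbabilityMeasure μ] (hμ : μ (frontier Ω)ᶜ = 0) {f : E2 → ℝ} (hf : Continuous f) :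
    Integrable f μ := by
  have hc : IsCompact (frontier Ω) :=
    Metric.isCompact_of_isClosed_isBounded isClosed_frontier
      (hb.closure.subset frontier_subset_closure)
  obtain ⟨M, hM⟩ := hc.exists_bound_of_continuousOn hf.continuousOn
  refine Integrable.of_bound (C := M) hf.aestronglyMeasurable ?_
  have : ∀ᵐ x ∂μ, x ∈ frontier Ω := by rw [ae_iff]; exact hμ
  filter_upwards [this] with x hx using hM x hx

lemma pde_part (M : ℝ) (hM : 0 < M) : ∃ C : ℝ, 0 < C ∧
    ∀ (Ω : Set E2), IsOpen Ω → Bornology.IsBounded Ω →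
      ∀ ω : E2 → Measure E2, IsHarmonicMeasureOfWienerRegular Ω ω →
        ∀ (x₀ : E2) (R : ℝ), 0 < R →
          ∀ ν : Measure E2, IsProbabilityMeasure ν → ν (closedBall x₀ (R / 4) \ Ω)ᶜ = 0 →
            (∀ z ∈ Ω, ∫ x, Real.log (R / dist z x) ∂ν ≤ M) →
            ∀ z ∈ Ω \ closedBall x₀ (2 * R),
              ∀ y ∈ closedBall x₀ (R / 5) ∩ Ω,
                green ω z y ≤ C * (ω z (closedBall x₀ (8 * R))).toReal := by
  have hl6 : 0 < Real.log 6 := Real.log_pos (by norm_num)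
  have hl8 : 0 < Real.log 8 := Real.log_pos (by norm_num)
  have hl94 : 0 < Real.log (9 / 4) := Real.log_pos (by norm_num)
  have hl694 : Real.log (9 / 4) < Real.log 6 := Real.log_lt_log (by norm_num) (by norm_num)
  set δ := (Real.log 6 - Real.log (9 / 4)) / (M + Real.log 6) with hδ
  set T := M + Real.log 8 + Real.log (9 / 4) with hT
  have hδ0 : 0 < δ := div_pos (by linarith) (by linarith)
  have hT0 : 0 < T := by linarith
  have hpi := Real.pi_pos
  refine ⟨T / δ / (2 * Real.pi), by positivity, ?_⟩
  rintro Ω hΩ hbd ω ⟨hω1, hω2, hω3⟩ x₀ R hR ν hνp hνF hUM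
  set F := closedBall x₀ (R / 4) \ Ω with hF
  have hFc : IsCompact F := (isCompact_closedBall x₀ (R / 4)).diff hΩ
  have hFΩ : Disjoint F Ω := Set.disjoint_sdiff_left
  have hmem : ∀ᵐ x ∂ν, x ∈ F := by rw [ae_iff]; exact hνF
  obtain ⟨hUh, hUi⟩ := harm_pot ν F Ω hFc hΩ hFΩ hνF R hR
  set U : E2 → ℝ := fun z => ∫ x, Real.log (R / dist z x) ∂ν with hU
  have hdisj : ∀ ξ ∈ frontier Ω, ξ ∉ Ω := by
    intro ξ hξ; rw [hΩ.frontier_eq] at hξ; exact hξ.2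
  have hUle : ∀ z ∈ Ω, ∀ c : ℝ, (∀ x ∈ F, Real.log (R / dist z x) ≤ c) → U z ≤ c := by
    intro z hz c hc
    have := integral_mono_ae (hUi z hz) (integrable_const c)
      (by filter_upwards [hmem] with x hx using hc x hx)
    simpa using this
  have hUge : ∀ z ∈ Ω, ∀ c : ℝ, (∀ x ∈ F, c ≤ Real.log (R / dist z x)) → c ≤ U z := by
    intro z hz c hc
    have := integral_mono_ae (integrable_const c) (hUi z hz)
      (by filter_upwards [hmem] with x hx using hc x hx)
    simpa using this
  have hne : ∀ z ∈ Ω, ∀ x ∈ F, 0 < dist z x := by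
    intro z hz x hx
    apply dist_pos.2
    rintro rfl
    exact hx.2 hz
  -- the cut-off function
  set φ : E2 → ℝ := fun ξ => max 0 (min 1 (8 - dist ξ x₀ / R)) with hφ
  have hφc : Continuous φ := by fun_prop
  have hφ0 : ∀ ξ, 0 ≤ φ ξ := fun ξ => le_max_left _ _
  have hφ1 : ∀ ξ, φ ξ ≤ 1 := fun ξ => max_le (by norm_num) (min_le_left _ _)
  set u : E2 → ℝ := fun z => ∫ ξ, φ ξ ∂(ω z) with hu
  obtain ⟨huh, hub⟩ := hω3 φ hφc
  have hu0 : ∀ z, 0 ≤ u z := fun z => integral_nonneg hφ0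
  have huω : ∀ z ∈ Ω, u z ≤ (ω z (closedBall x₀ (8 * R))).toReal := by
    intro z hz
    have := hω1 z hz
    have h1 : (ω z (closedBall x₀ (8 * R))).toReal =
        ∫ ξ, (closedBall x₀ (8 * R)).indicator (fun _ => (1 : ℝ)) ξ ∂(ω z) := by
      rw [integral_indicator measurableSet_closedBall]; simp [Measure.real]
    rw [h1]
    apply integral_mono (int_cont_frontier hbd (ω z) (hω2 z hz) hφc)
    · exact (integrable_const (1 : ℝ)).indicator measurableSet_closedBall
    · intro ξ
      by_cases hξ : ξ ∈ closedBall x₀ (8 * R)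
      · simp only [Set.indicator_of_mem hξ]; exact hφ1 ξ
      · simp only [Set.indicator_of_notMem hξ]
        rw [mem_closedBall, not_le] at hξ
        have : 8 < dist ξ x₀ / R := by rw [lt_div_iff₀ hR]; exact hξ
        apply max_le le_rfl
        exact (min_le_right _ _).trans (by linarith)
  -- Step 1
  have step1 : ∀ z ∈ Ω, U z + Real.log 6 ≤ (M + Real.log 6) * u z := by
    intro z hz
    have key := min_principle (v := fun z => (M + Real.log 6) * u z - (U z + Real.log 6)) hΩ hbd
      (harm_sub (harm_mul _ huh) (harm_add hUh (harm_const _))) ?_ z hz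
    · linarith
    · intro ξ hξ ε hε
      by_cases h7 : dist ξ x₀ < 7 * R
      · have hφξ : φ ξ = 1 := by
          have : dist ξ x₀ / R < 7 := by rw [div_lt_iff₀ hR]; exact h7
          simp only [hφ]
          rw [min_eq_left (by linarith)]; norm_num
        have h1 := hub ξ hξ
        rw [hφξ] at h1
        have h2 : ∀ᶠ z in nhdsWithin ξ Ω, 1 - ε / (M + Real.log 6) < u z :=
          h1.eventually_const_lt (by
            have : 0 < ε / (M + Real.log 6) := by positivity
            linarith)
        filter_upwards [h2, self_mem_nhdsWithin] with w hw1 hw2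
        have h3 := hUM w hw2
        have h4 : (M + Real.log 6) * (1 - ε / (M + Real.log 6)) ≤ (M + Real.log 6) * u w :=
          mul_le_mul_of_nonneg_left hw1.le (by linarith)
        have h5 : (M + Real.log 6) * (1 - ε / (M + Real.log 6)) = M + Real.log 6 - ε := by
          have : M + Real.log 6 ≠ 0 := by linarith
          field_simp
        have h6 : U w ≤ M := h3
        linarith
      · have h1 : ∀ᶠ z in nhdsWithin ξ Ω, 13 / 2 * R < dist z x₀ := by
          apply Filter.Eventually.filter_mono nhdsWithin_le_nhds
          have : ContinuousAt (fun z => dist z x₀) ξ := by fun_prop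
          exact this.eventually_const_lt (by push Not at h7; linarith)
        filter_upwards [h1, self_mem_nhdsWithin] with w hw1 hw2
        have h2 : U w ≤ - Real.log 6 := by
          apply hUle w hw2
          intro x hx
          have hd : 6 * R ≤ dist w x := by
            have h3 := dist_triangle w x x₀
            have h4 : dist x x₀ ≤ R / 4 := hx.1
            linarith
          rw [← Real.log_inv]
          apply Real.log_le_log (div_pos hR (hne w hw2 x hx))
          rw [div_le_iff₀ (hne w hw2 x hx)]
          linarith
        have h3 : 0 ≤ (M + Real.log 6) * u w := mul_nonneg (by linarith) (hu0 w)
        linarith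
  intro z hz y hy
  -- the boundary function
  obtain ⟨d, hd, hdball⟩ := Metric.isOpen_iff.1 hΩ y hy.2
  have hyx₀ : dist y x₀ ≤ R / 5 := hy.1
  set f : E2 → ℝ := fun ξ => Real.log (R / max (dist ξ y) d) with hf
  have hfc : Continuous f := by
    have hpos : ∀ ξ, 0 < max (dist ξ y) d := fun ξ => lt_max_of_lt_right hd
    apply Continuous.log
    · exact continuous_const.div (by fun_prop) (fun ξ => (hpos ξ).ne')
    · intro ξ; exact (div_pos hR (hpos ξ)).ne'
  have hfd : ∀ ξ ∈ frontier Ω, d ≤ dist ξ y := by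
    intro ξ hξ
    by_contra! hc
    exact hdisj ξ hξ (hdball hc)
  have hfeq : ∀ ξ ∈ frontier Ω, f ξ = Real.log (R / dist ξ y) := by
    intro ξ hξ
    simp only [hf, max_eq_left (hfd ξ hξ)]
  set G : E2 → ℝ := fun z => ∫ ξ, f ξ ∂(ω z) with hG
  obtain ⟨hGh, hGb⟩ := hω3 f hfc
  have hgreen : ∀ w ∈ Ω, w ≠ y → green ω w y = (1 / (2 * Real.pi)) *
      (Real.log (R / dist w y) - G w) := by
    intro w hw hwy
    have := hω1 w hw
    have hfr : ∀ᵐ x ∂(ω w), x ∈ frontier Ω := by rw [ae_iff]; exact hω2 w hw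
    have h1 : ∫ ξ, fund ξ y ∂(ω w) = ∫ ξ, (1 / (2 * Real.pi)) * (f ξ - Real.log R) ∂(ω w) := by
      apply integral_congr_ae
      filter_upwards [hfr] with ξ hξ
      have hpos : 0 < dist ξ y := hd.trans_le (hfd ξ hξ)
      rw [hfeq ξ hξ, fund, Real.log_div hR.ne' hpos.ne', Real.log_div one_ne_zero hpos.ne',
        Real.log_one]
      ring
    have hpos : 0 < dist w y := dist_pos.2 hwy
    rw [green, h1, integral_const_mul, integral_sub
      (int_cont_frontier hbd (ω w) (hω2 w hw) hfc) (integrable_const _), fund,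
      Real.log_div hR.ne' hpos.ne', Real.log_div one_ne_zero hpos.ne', Real.log_one]
    simp only [integral_const, probReal_univ, smul_eq_mul, hG]
    ring
  -- pointwise inequality
  have hpt : ∀ w ∈ Ω, w ≠ y → U w ≤ Real.log (R / dist w y) + (M + Real.log 8) := by
    intro w hw hwy
    have hpos : 0 < dist w y := dist_pos.2 hwy
    by_cases h7 : dist w x₀ < 7 * R
    · have h1 : - Real.log 8 ≤ Real.log (R / dist w y) := by
        rw [← Real.log_inv]
        apply Real.log_le_log (by norm_num)
        rw [le_div_iff₀ hpos]
        have := dist_triangle w x₀ y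
        rw [dist_comm x₀ y] at this
        linarith
      have : U w ≤ M := hUM w hw
      linarith
    · apply hUle w hw
      intro x hx
      push Not at h7
      have h4 : dist x x₀ ≤ R / 4 := hx.1
      have hwx := hne w hw x hx
      have h5 : dist w y ≤ 8 * dist w x := by
        have h6 := dist_triangle w x x₀
        have h8 := dist_triangle w x₀ y
        rw [dist_comm x₀ y] at h8
        have h9 := dist_triangle w x₀ x
        linarith
      have h6 : Real.log (R / dist w x) ≤ Real.log (R / dist w y * 8) := by
        apply Real.log_le_log (div_pos hR hwx)
        rw [div_mul_eq_mul_div, div_le_div_iff₀ hwx hpos]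
        nlinarith
      rw [Real.log_mul (div_pos hR hpos).ne' (by norm_num)] at h6
      linarith
  -- Step 2
  have step2 : ∀ w ∈ Ω, U w ≤ G w + (M + Real.log 8) := by
    intro w hw
    have key := min_principle (v := fun z => (G z + (M + Real.log 8)) - U z) hΩ hbd
      (harm_sub (harm_add hGh (harm_const _)) hUh) ?_ w hw
    · linarith
    · intro ξ hξ ε hε
      have hξy : ξ ∈ ({y}ᶜ : Set E2) := by
        rintro rfl; exact hdisj _ hξ hy.2
      have h1 := hGb ξ hξ
      rw [hfeq ξ hξ] at h1
      have h2 : Filter.Tendsto (fun w => Real.log (R / dist w y)) (nhdsWithin ξ Ω)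
          (nhds (Real.log (R / dist ξ y))) :=
        ((log_cont_on y R).continuousAt (isOpen_compl_singleton.mem_nhds hξy)).tendsto.mono_left
          nhdsWithin_le_nhds
      have h3 := h1.sub h2
      rw [sub_self] at h3
      have h4 := h3.eventually_const_lt (show -ε < 0 by linarith)
      have h5 : ∀ᶠ w in nhdsWithin ξ Ω, w ∈ ({y}ᶜ : Set E2) :=
        Filter.Eventually.filter_mono nhdsWithin_le_nhds (isOpen_compl_singleton.mem_nhds hξy)
      filter_upwards [h4, h5, self_mem_nhdsWithin] with w hw1 hw2 hw3
      have h6 := hpt w hw3 hw2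
      have h7 : -ε < G w - Real.log (R / dist w y) := hw1
      linarith
  -- Step 3
  set W := Ω \ closedBall x₀ (2 * R) with hW
  have hWo : IsOpen W := hΩ.sdiff isClosed_closedBall
  have hWb : Bornology.IsBounded W := hbd.subset Set.sdiff_subset
  have hyW : y ∉ W := by
    intro h; apply h.2; rw [mem_closedBall]; linarith
  have hharm : HarmonicOnSet (fun w => (T / δ) * u w - (Real.log (R / dist w y) - G w)) W :=
    harm_sub (harm_mul _ (harm_mono huh Set.sdiff_subset))
      (harm_sub (harm_log y R hR W hyW) (harm_mono hGh Set.sdiff_subset))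
  have step3 := min_principle hWo hWb hharm ?_ z hz
  · have hzy : z ≠ y := by rintro rfl; exact hyW hz
    rw [hgreen z hz.1 hzy]
    have h1 : Real.log (R / dist z y) - G z ≤ T / δ * u z := by linarith
    calc (1 / (2 * Real.pi)) * (Real.log (R / dist z y) - G z)
        ≤ (1 / (2 * Real.pi)) * (T / δ * u z) := mul_le_mul_of_nonneg_left h1 (by positivity)
      _ = T / δ / (2 * Real.pi) * u z := by ring
      _ ≤ _ := mul_le_mul_of_nonneg_left (huω z hz.1) (by positivity)
  · intro ξ hξ ε hε
    have hξW : ξ ∉ W := by rw [hWo.frontier_eq] at hξ; exact hξ.2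
    have hξc : ξ ∈ closure W := frontier_subset_closure hξ
    have hWsub : W ⊆ {w | 2 * R ≤ dist w x₀} := by
      intro w hw
      have := hw.2
      rw [mem_closedBall, not_le] at this
      exact this.le
    have hξ2 : 2 * R ≤ dist ξ x₀ := by
      have hcl : IsClosed {w : E2 | 2 * R ≤ dist w x₀} :=
        isClosed_le continuous_const (by fun_prop)
      exact closure_minimal hWsub hcl hξc
    have hξy : ξ ∈ ({y}ᶜ : Set E2) := by
      rintro rfl; linarith
    by_cases hξΩ : ξ ∈ Ω
    · -- interior sphere point
      have hξ2' : dist ξ x₀ = 2 * R := by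
        apply le_antisymm _ hξ2
        by_contra! hc
        exact hξW ⟨hξΩ, by rw [mem_closedBall, not_le]; exact hc⟩
      have hcont : ContinuousAt
          (fun w => (T / δ) * u w - (Real.log (R / dist w y) - G w)) ξ :=
        (continuousAt_const.mul (huh.1.continuousAt (hΩ.mem_nhds hξΩ))).sub
          (((log_cont_on y R).continuousAt (isOpen_compl_singleton.mem_nhds hξy)).sub
            (hGh.1.continuousAt (hΩ.mem_nhds hξΩ)))
      have hUξ : - Real.log (9 / 4) ≤ U ξ := by
        apply hUge ξ hξΩ
        intro x hx
        have hd := hne ξ hξΩ x hx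
        have h4 : dist x x₀ ≤ R / 4 := hx.1
        have h5 := dist_triangle ξ x₀ x
        rw [dist_comm x₀ x] at h5
        rw [← Real.log_inv]
        apply Real.log_le_log (by norm_num)
        rw [le_div_iff₀ hd]
        linarith
      have h1 := step1 ξ hξΩ
      have h2 := step2 ξ hξΩ
      have h3 : δ ≤ u ξ := by
        rw [hδ, div_le_iff₀ (by linarith)]
        linarith
      have h4 : T ≤ T / δ * u ξ := by
        calc T = T / δ * δ := by field_simp
          _ ≤ _ := mul_le_mul_of_nonneg_left h3 (by positivity)
      have h5 : Real.log (R / dist ξ y) ≤ 0 := by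
        have hdy : R ≤ dist ξ y := by
          have := dist_triangle ξ y x₀
          linarith
        apply Real.log_nonpos (by positivity)
        rw [div_le_one (by linarith)]; exact hdy
      have h6 : 0 ≤ (T / δ) * u ξ - (Real.log (R / dist ξ y) - G ξ) := by linarith
      have h7 := hcont.eventually_const_lt (show -ε < _ by linarith)
      exact Filter.Eventually.filter_mono nhdsWithin_le_nhds (h7.mono fun w hw => le_of_lt hw)
    · have hξf : ξ ∈ frontier Ω := by
        rw [hΩ.frontier_eq]; exact ⟨closure_mono Set.sdiff_subset hξc, hξΩ⟩
      have h1 := hGb ξ hξf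
      rw [hfeq ξ hξf] at h1
      have h2 : Filter.Tendsto (fun w => Real.log (R / dist w y)) (nhdsWithin ξ Ω)
          (nhds (Real.log (R / dist ξ y))) :=
        ((log_cont_on y R).continuousAt (isOpen_compl_singleton.mem_nhds hξy)).tendsto.mono_left
          nhdsWithin_le_nhds
      have h3 := h1.sub h2
      rw [sub_self] at h3
      have h4 := h3.eventually_const_lt (show -ε < 0 by linarith)
      have h5 := Filter.Eventually.filter_mono (nhdsWithin_mono ξ (Set.sdiff_subset : W ⊆ Ω)) h4
      filter_upwards [h5] with w hw
      have h6 : -ε < G w - Real.log (R / dist w y) := hw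
      have h7 : 0 ≤ T / δ * u w := mul_nonneg (by positivity) (hu0 w)
      linarith


/-- logarithmic kernel at scale `S` -/
noncomputable def Ker (S : ℝ) (p : E2 × E2) : ℝ≥0∞ :=
  if p.1 = p.2 then ⊤ else ENNReal.ofReal (Real.log (S / dist p.1 p.2))

lemma Ker_meas (S : ℝ) : Measurable (Ker S) := by
  unfold Ker
  refine Measurable.ite ?_ measurable_const ?_
  · exact (isClosed_eq continuous_fst continuous_snd).measurableSet
  · fun_prop

lemma energy_eq (μ : Measure E2) [IsProbabilityMeasure μ] (x₀ : E2) (ρ S : ℝ) (hS : 0 < S)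
    (hρ : 2 * ρ ≤ S) (hμ : μ (closedBall x₀ ρ)ᶜ = 0) :
    logEnergy μ = ((∫⁻ p, Ker S p ∂(μ.prod μ) : ℝ≥0∞) : EReal) - ((Real.log S : ℝ) : EReal) := by
  have hmem : ∀ᵐ x ∂μ, x ∈ closedBall x₀ ρ := by rw [ae_iff]; exact hμ
  have h1 : ∀ᵐ p ∂(μ.prod μ), p.1 ∈ closedBall x₀ ρ :=
    Measure.quasiMeasurePreserving_fst.ae hmem
  have h2 : ∀ᵐ p ∂(μ.prod μ), p.2 ∈ closedBall x₀ ρ :=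
    Measure.quasiMeasurePreserving_snd.ae hmem
  have hd : ∀ᵐ p ∂(μ.prod μ), dist p.1 p.2 ≤ S := by
    filter_upwards [h1, h2] with p hp1 hp2
    rw [mem_closedBall] at hp1 hp2
    have := dist_triangle_right p.1 p.2 x₀
    linarith
  have hP : (fun p : E2 × E2 => if p.1 = p.2 then (⊤ : ℝ≥0∞) else
      ENNReal.ofReal (Real.log (1 / dist p.1 p.2))) = Ker 1 := rfl
  have hNm : Measurable (fun p : E2 × E2 => ENNReal.ofReal (Real.log (dist p.1 p.2))) := by
    fun_prop
  unfold logEnergy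
  rw [hP]
  set N := ∫⁻ p : E2 × E2, ENNReal.ofReal (Real.log (dist p.1 p.2)) ∂(μ.prod μ) with hN
  set P := ∫⁻ p, Ker 1 p ∂(μ.prod μ) with hPd
  set Q := ∫⁻ p, Ker S p ∂(μ.prod μ) with hQ
  have hNt : N ≠ ⊤ := by
    have : N ≤ ∫⁻ _p : E2 × E2, ENNReal.ofReal |Real.log S| ∂(μ.prod μ) := by
      apply lintegral_mono_ae
      filter_upwards [hd] with p hp
      apply ENNReal.ofReal_le_ofReal
      rcases (dist_nonneg : 0 ≤ dist p.1 p.2).eq_or_lt with h0 | h0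
      · rw [← h0]; simp
      · exact (Real.log_le_log h0 hp).trans (le_abs_self _)
    refine ne_top_of_le_ne_top ?_ this
    simp
  have hid : Q + N + ENNReal.ofReal (-Real.log S) = P + ENNReal.ofReal (Real.log S) := by
    have e1 : ∀ c : ℝ≥0∞, c = ∫⁻ _p : E2 × E2, c ∂(μ.prod μ) := by intro c; simp
    rw [e1 (ENNReal.ofReal (-Real.log S)), e1 (ENNReal.ofReal (Real.log S)), hQ, hN, hPd,
      ← lintegral_add_left (Ker_meas S), ← lintegral_add_right _ measurable_const,
      ← lintegral_add_right _ measurable_const]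
    apply lintegral_congr_ae
    filter_upwards [hd] with p hp
    by_cases hpp : p.1 = p.2
    · simp [Ker, hpp]
    · have h0 : 0 < dist p.1 p.2 := dist_pos.2 hpp
      simp only [Ker, if_neg hpp]
      rw [Real.log_div hS.ne' h0.ne', Real.log_div one_ne_zero h0.ne', Real.log_one, zero_sub]
      have hle := Real.log_le_log h0 hp
      generalize Real.log (dist p.1 p.2) = b at *
      generalize Real.log S = a at *
      have m1 : ∀ r : ℝ, ENNReal.ofReal r = ENNReal.ofReal (max r 0) := by
        intro r
        rcases le_total r 0 with h | h
        · rw [max_eq_right h, ENNReal.ofReal_of_nonpos h, ENNReal.ofReal_zero]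
        · rw [max_eq_left h]
      rw [m1 b, m1 (-a), m1 (-b), m1 a, ← ENNReal.ofReal_add (by linarith) (le_max_right _ _),
        ← ENNReal.ofReal_add (add_nonneg (by linarith) (le_max_right _ _)) (le_max_right _ _),
        ← ENNReal.ofReal_add (le_max_right _ _) (le_max_right _ _)]
      congr 1
      have n1 : ∀ r : ℝ, max r 0 - max (-r) 0 = r := by
        intro r
        rcases le_total r 0 with h | h
        · rw [max_eq_right h, max_eq_left (by linarith)]; ring
        · rw [max_eq_left h, max_eq_right (by linarith)]; ring
      have := n1 a
      have := n1 b
      linarith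
  by_cases hQt : Q = ⊤
  · have hPt : P = ⊤ := by
      by_contra hPt
      rw [hQt] at hid
      simp only [top_add] at hid
      exact absurd hid.symm (ENNReal.add_ne_top.2 ⟨hPt, ENNReal.ofReal_ne_top⟩)
    rw [hQt, hPt]
    rw [← EReal.coe_ennreal_toReal hNt, EReal.coe_ennreal_top, EReal.top_sub_coe,
      EReal.top_sub_coe]
  · have hPt : P ≠ ⊤ := by
      intro hPt
      rw [hPt, top_add] at hid
      exact absurd hid (ENNReal.add_ne_top.2
        ⟨ENNReal.add_ne_top.2 ⟨hQt, hNt⟩, ENNReal.ofReal_ne_top⟩)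
    have hr := congrArg ENNReal.toReal hid
    rw [ENNReal.toReal_add (ENNReal.add_ne_top.2 ⟨hQt, hNt⟩) ENNReal.ofReal_ne_top,
      ENNReal.toReal_add hQt hNt, ENNReal.toReal_add hPt ENNReal.ofReal_ne_top] at hr
    have hlog : (ENNReal.ofReal (Real.log S)).toReal - (ENNReal.ofReal (-Real.log S)).toReal
        = Real.log S := by
      rw [ENNReal.toReal_ofReal', ENNReal.toReal_ofReal']
      rcases le_total (Real.log S) 0 with h | h
      · rw [max_eq_right h, max_eq_left (by linarith)]; ring
      · rw [max_eq_left h, max_eq_right (by linarith)]; ring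
    rw [← EReal.coe_ennreal_toReal hQt, ← EReal.coe_ennreal_toReal hNt,
      ← EReal.coe_ennreal_toReal hPt, ← EReal.coe_sub, ← EReal.coe_sub, EReal.coe_eq_coe_iff]
    linarith

lemma wienerV_ge (x₀ : E2) (ρ S : ℝ) (hS : 0 < S) (hρ : 2 * ρ ≤ S) (F : Set E2)
    (hF : F ⊆ closedBall x₀ ρ) : ((-Real.log S : ℝ) : EReal) ≤ wienerV F := by
  unfold wienerV
  refine le_iInf fun μ => le_iInf fun hμ => le_iInf fun hμF => ?_
  rw [energy_eq μ x₀ ρ S hS hρ (measure_mono_null (Set.compl_subset_compl.2 hF) hμF),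
    EReal.coe_neg, sub_eq_add_neg]
  exact le_add_of_nonneg_left (EReal.coe_ennreal_nonneg _)

lemma ker_int (x : E2) (R : ℝ) (hR : 0 < R) :
    ∫⁻ y, Ker (2 * R) (x, y) ≤ ENNReal.ofReal (2 * Real.pi * R ^ 2) := by
  have h1 : ∫⁻ y, Ker (2 * R) (x, y) =
      ∫⁻ y, ENNReal.ofReal (max (Real.log (2 * R / dist x y)) 0) := by
    apply lintegral_congr_ae
    have : ∀ᵐ y : E2, y ≠ x := by
      rw [ae_iff]; simp
    filter_upwards [this] with y hy
    simp only [Ker, if_neg hy.symm]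
    rcases le_total (Real.log (2 * R / dist x y)) 0 with h | h
    · rw [max_eq_right h, ENNReal.ofReal_of_nonpos h, ENNReal.ofReal_zero]
    · rw [max_eq_left h]
  rw [h1, lintegral_eq_lintegral_meas_lt (f := fun y : E2 => max (Real.log (2 * R / dist x y)) 0) volume
    (Filter.Eventually.of_forall fun y => le_max_right _ _)
    (by
      have : Measurable (fun y : E2 => max (Real.log (2 * R / dist x y)) 0) := by fun_prop
      exact this.aemeasurable)]
  have h2 : ∫⁻ t in Set.Ioi (0 : ℝ), volume {y : E2 | t < max (Real.log (2 * R / dist x y)) 0} ≤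
      ∫⁻ t in Set.Ioi (0 : ℝ), ENNReal.ofReal (4 * Real.pi * R ^ 2 * Real.exp (-2 * t)) := by
    apply setLIntegral_mono' measurableSet_Ioi
    intro t ht
    have ht : 0 < t := ht
    have hsub : {y : E2 | t < max (Real.log (2 * R / dist x y)) 0} ⊆
        ball x (2 * R * Real.exp (-t)) := by
      intro y hy
      rcases lt_max_iff.1 (show t < max (Real.log (2 * R / dist x y)) 0 from hy) with h | h
      · rcases (dist_nonneg : 0 ≤ dist x y).eq_or_lt with h0 | h0
        · rw [← h0] at h; simp at h; linarith
        · rw [Real.lt_log_iff_exp_lt (by positivity), lt_div_iff₀ h0] at h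
          rw [mem_ball, dist_comm, Real.exp_neg, ← div_eq_mul_inv, lt_div_iff₀ (Real.exp_pos t)]
          linarith
      · linarith
    refine (measure_mono hsub).trans ?_
    rw [EuclideanSpace.volume_ball_fin_two, ← ENNReal.ofReal_pow (by positivity)]
    rw [← ENNReal.ofReal_mul (by positivity)]
    apply ENNReal.ofReal_le_ofReal
    have : Real.exp (-2 * t) = Real.exp (-t) ^ 2 := by
      rw [← Real.exp_nat_mul]; congr 1; push_cast; ring
    rw [this]
    apply le_of_eq
    ring
  refine h2.trans ?_
  have hi : IntegrableOn (fun t : ℝ => 4 * Real.pi * R ^ 2 * Real.exp (-2 * t)) (Set.Ioi 0) :=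
    (integrableOn_exp_mul_Ioi (by norm_num) 0).const_mul _
  rw [← ofReal_integral_eq_lintegral_ofReal hi
    (Filter.Eventually.of_forall fun t => by positivity), integral_const_mul,
    integral_exp_mul_Ioi (by norm_num)]
  apply ENNReal.ofReal_le_ofReal
  simp
  apply le_of_eq
  ring

lemma wienerV_ball_le (x₀ : E2) (R : ℝ) (hR : 0 < R) :
    wienerV (closedBall x₀ R) ≤ ((2 - Real.log (2 * R) : ℝ) : EReal) := by
  set B := closedBall x₀ R with hB
  have hvol : volume B = ENNReal.ofReal (Real.pi * R ^ 2) := by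
    rw [hB, EuclideanSpace.volume_closedBall_fin_two, ← ENNReal.ofReal_pow hR.le,
      ← ENNReal.ofReal_mul (by positivity)]
    rw [mul_comm]
  have hpr : 0 < Real.pi * R ^ 2 := by have := Real.pi_pos; positivity
  have hv0 : volume B ≠ 0 := by rw [hvol]; simpa using hpr
  have hvt : volume B ≠ ⊤ := by rw [hvol]; exact ENNReal.ofReal_ne_top
  set σ := ProbabilityTheory.cond volume B with hσ
  have hσp : IsProbabilityMeasure σ := ProbabilityTheory.cond_isProbabilityMeasure_of_finite hv0 hvt
  have hσB : σ Bᶜ = 0 := by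
    rw [hσ, ProbabilityTheory.cond_apply measurableSet_closedBall, Set.inter_compl_self, measure_empty, mul_zero]
  have hle : wienerV B ≤ logEnergy σ := by
    unfold wienerV
    exact iInf_le_of_le σ (iInf_le_of_le hσp (iInf_le_of_le hσB le_rfl))
  refine hle.trans ?_
  rw [energy_eq σ x₀ R (2 * R) (by linarith) le_rfl hσB, EReal.coe_sub]
  apply EReal.sub_le_sub _ le_rfl
  have hQ : ∫⁻ p, Ker (2 * R) p ∂(σ.prod σ) ≤ ENNReal.ofReal 2 := by
    rw [lintegral_prod _ (Ker_meas _).aemeasurable]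
    have hin : ∀ x, ∫⁻ y, Ker (2 * R) (x, y) ∂σ ≤ ENNReal.ofReal 2 := by
      intro x
      rw [hσ, ProbabilityTheory.cond, lintegral_smul_measure]
      have h1 := (setLIntegral_le_lintegral B (fun y => Ker (2 * R) (x, y))).trans (ker_int x R hR)
      rw [smul_eq_mul]
      calc (volume B)⁻¹ * ∫⁻ y in B, Ker (2 * R) (x, y)
          ≤ (volume B)⁻¹ * ENNReal.ofReal (2 * Real.pi * R ^ 2) := by gcongr
        _ = (volume B)⁻¹ * (volume B * ENNReal.ofReal 2) := by
            rw [hvol, ← ENNReal.ofReal_mul hpr.le]; congr 2; ring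
        _ = ENNReal.ofReal 2 := by
            rw [← mul_assoc, ENNReal.inv_mul_cancel hv0 hvt, one_mul]
    calc _ ≤ ∫⁻ _x, ENNReal.ofReal 2 ∂σ := lintegral_mono hin
      _ = _ := by simp
  calc _ ≤ ((ENNReal.ofReal 2 : ℝ≥0∞) : EReal) := by exact_mod_cast hQ
    _ = _ := by rw [EReal.coe_ennreal_ofReal]; simp

lemma cap_energy (c₁ : ℝ) (hc₁ : 0 < c₁) : ∃ E₀ : ℝ, 0 < E₀ ∧
    ∀ (x₀ : E2) (R : ℝ) (F : Set E2), 0 < R → F ⊆ closedBall x₀ (R / 4) →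
      c₁ * logCap (closedBall x₀ R) ≤ logCap F →
      ∃ μ : Measure E2, IsProbabilityMeasure μ ∧ μ Fᶜ = 0 ∧
        ∫⁻ p, Ker R p ∂(μ.prod μ) ≤ ENNReal.ofReal E₀ := by
  refine ⟨3 + |Real.log c₁|, by positivity, ?_⟩
  intro x₀ R F hR hFB hcap
  have hB1 := wienerV_ball_le x₀ R hR
  have hB2 := wienerV_ge x₀ R (2 * R) (by linarith) le_rfl _ subset_rfl
  have hF2 := wienerV_ge x₀ (R / 4) R hR (by linarith) F hFB
  have hBt : wienerV (closedBall x₀ R) ≠ ⊤ := fun h => by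
    rw [h] at hB1; exact absurd hB1 (not_le.2 (EReal.coe_lt_top _))
  have hBb : wienerV (closedBall x₀ R) ≠ ⊥ := fun h => by
    rw [h] at hB2; exact absurd hB2 (by simp)
  have hFb : wienerV F ≠ ⊥ := fun h => by
    rw [h] at hF2; exact absurd hF2 (by simp)
  unfold logCap at hcap
  rw [if_neg hBt] at hcap
  have hFt : wienerV F ≠ ⊤ := fun h => by
    rw [if_pos h] at hcap
    have : 0 < c₁ * Real.exp (-(wienerV (closedBall x₀ R)).toReal) := by positivity
    linarith
  rw [if_neg hFt] at hcap
  rw [← EReal.coe_toReal hBt hBb, EReal.coe_le_coe_iff] at hB1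
  generalize (wienerV (closedBall x₀ R)).toReal = b at *
  have hv := EReal.coe_toReal hFt hFb
  generalize (wienerV F).toReal = v at *
  have h1 : Real.log c₁ - b ≤ -v := by
    have := Real.log_le_log (by positivity) hcap
    rwa [Real.log_mul hc₁.ne' (Real.exp_pos _).ne', Real.log_exp, Real.log_exp] at this
  have h2 : v + Real.log R < 3 + |Real.log c₁| - 1 := by
    rw [Real.log_mul (by norm_num) hR.ne'] at hB1
    have := neg_abs_le (Real.log c₁)
    have := Real.log_pos (show (1 : ℝ) < 2 by norm_num)
    linarith
  have h3 : wienerV F < ((v + 1 : ℝ) : EReal) := by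
    rw [← hv, EReal.coe_lt_coe_iff]; linarith
  unfold wienerV at h3
  simp only [iInf_lt_iff] at h3
  obtain ⟨μ, hμ, hμF, hμe⟩ := h3
  refine ⟨μ, hμ, hμF, ?_⟩
  rw [energy_eq μ x₀ (R / 4) R hR (by linarith)
    (measure_mono_null (Set.compl_subset_compl.2 hFB) hμF)] at hμe
  set Q := ∫⁻ p, Ker R p ∂(μ.prod μ)
  have hQt : Q ≠ ⊤ := by
    intro h
    rw [h, EReal.coe_ennreal_top, EReal.top_sub_coe] at hμe
    exact absurd hμe (by simp)
  rw [← EReal.coe_ennreal_toReal hQt, ← EReal.coe_sub, EReal.coe_lt_coe_iff] at hμe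
  rw [← ENNReal.ofReal_toReal hQt]
  apply ENNReal.ofReal_le_ofReal
  linarith

lemma cap_part (c₁ : ℝ) (hc₁ : 0 < c₁) : ∃ M : ℝ, 0 < M ∧
    ∀ (Ω : Set E2), IsOpen Ω → ∀ (x₀ : E2) (R : ℝ), 0 < R →
      c₁ * logCap (closedBall x₀ R) ≤ logCap (closedBall x₀ (R / 4) \ Ω) →
      ∃ ν : Measure E2, IsProbabilityMeasure ν ∧ ν (closedBall x₀ (R / 4) \ Ω)ᶜ = 0 ∧
        (∀ z ∈ Ω, ∫ x, Real.log (R / dist z x) ∂ν ≤ M) := by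
  obtain ⟨E₀, hE₀, hE⟩ := cap_energy c₁ hc₁
  have hl3 : 0 < Real.log 3 := Real.log_pos (by norm_num)
  refine ⟨4 * E₀ + Real.log 3, by linarith, ?_⟩
  intro Ω hΩ x₀ R hR hcap
  set F := closedBall x₀ (R / 4) \ Ω with hF
  have hFc : IsCompact F := (isCompact_closedBall x₀ (R / 4)).diff hΩ
  have hFΩ : Disjoint F Ω := Set.disjoint_sdiff_left
  obtain ⟨μ, hμ, hμF, hμe⟩ := hE x₀ R F hR Set.sdiff_subset hcap
  rw [lintegral_prod _ (Ker_meas _).aemeasurable] at hμe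
  set L : E2 → ℝ≥0∞ := fun x => ∫⁻ y, Ker R (x, y) ∂μ with hL
  have hLm : Measurable L := (Ker_meas R).lintegral_prod_right'
  set A := F ∩ {x | L x < ENNReal.ofReal (2 * E₀)} with hA
  have hAm : MeasurableSet A := hFc.measurableSet.inter (measurableSet_lt hLm measurable_const)
  have hmk := mul_meas_ge_le_lintegral hLm (μ := μ) (ENNReal.ofReal (2 * E₀))
  have hhalf : μ {x | ENNReal.ofReal (2 * E₀) ≤ L x} ≤ 1 / 2 := by
    have h1 : ENNReal.ofReal (2 * E₀) * μ {x | ENNReal.ofReal (2 * E₀) ≤ L x} ≤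
        ENNReal.ofReal (2 * E₀) * (1 / 2) := by
      refine (hmk.trans hμe).trans (le_of_eq ?_)
      rw [mul_comm 2 E₀, ENNReal.ofReal_mul hE₀.le, mul_assoc]
      have : ENNReal.ofReal 2 * (1 / 2) = 1 := by
        rw [one_div, ENNReal.ofReal_ofNat]; exact ENNReal.mul_inv_cancel (by simp) (by simp)
      rw [this, mul_one]
    exact (ENNReal.mul_le_mul_iff_right (by simpa using hE₀) ENNReal.ofReal_ne_top).1 h1
  have hAc : μ Aᶜ ≤ 1 / 2 := by
    have : Aᶜ ⊆ Fᶜ ∪ {x | ENNReal.ofReal (2 * E₀) ≤ L x} := by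
      intro x hx
      by_cases h : x ∈ F
      · right
        by_contra hc
        exact hx ⟨h, show L x < _ from not_le.1 hc⟩
      · left; exact h
    calc μ Aᶜ ≤ μ Fᶜ + μ {x | ENNReal.ofReal (2 * E₀) ≤ L x} :=
          (measure_mono this).trans (measure_union_le _ _)
      _ ≤ 1 / 2 := by rw [hμF, zero_add]; exact hhalf
  have hAge : (1 / 2 : ℝ≥0∞) ≤ μ A := by
    have h1 : μ A + μ Aᶜ = 1 := by rw [measure_add_measure_compl hAm, measure_univ]
    by_contra! hc
    have : μ A + μ Aᶜ < 1 / 2 + 1 / 2 :=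
      ENNReal.add_lt_add_of_lt_of_le (ne_top_of_le_ne_top (by simp) hAc) hc hAc
    rw [h1, ENNReal.add_halves] at this
    exact lt_irrefl _ this
  have hA0 : μ A ≠ 0 := fun h => by rw [h] at hAge; simp at hAge
  set ν := ProbabilityTheory.cond μ A with hν
  have hνp : IsProbabilityMeasure ν := ProbabilityTheory.cond_isProbabilityMeasure hA0
  have hνA : ν Aᶜ = 0 := by
    rw [hν, ProbabilityTheory.cond_apply hAm]; simp
  have hνF : ν Fᶜ = 0 :=
    measure_mono_null (Set.compl_subset_compl.2 Set.inter_subset_left) hνA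
  have hmemA : ∀ᵐ x ∂ν, x ∈ A := by rw [ae_iff]; exact hνA
  have hpot : ∀ x ∈ A, ∫⁻ y, Ker R (x, y) ∂ν ≤ ENNReal.ofReal (4 * E₀) := by
    intro x hx
    rw [hν, ProbabilityTheory.cond, lintegral_smul_measure, smul_eq_mul]
    have h1 : ∫⁻ y in A, Ker R (x, y) ∂μ ≤ ENNReal.ofReal (2 * E₀) :=
      (setLIntegral_le_lintegral _ _).trans hx.2.le
    have h2 : (μ A)⁻¹ ≤ ENNReal.ofReal 2 := by
      rw [ENNReal.inv_le_iff_inv_le]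
      simpa using hAge
    calc _ ≤ ENNReal.ofReal 2 * ENNReal.ofReal (2 * E₀) := by gcongr
      _ = _ := by rw [← ENNReal.ofReal_mul (by norm_num)]; congr 1; ring
  refine ⟨ν, hνp, hνF, ?_⟩
  intro z hz
  have hintgr := (harm_pot ν F Ω hFc hΩ hFΩ hνF R hR).2 z hz
  have hAne : A.Nonempty := nonempty_of_measure_ne_zero hA0
  have hzA : z ∉ closure A := by
    intro h
    have : closure A ⊆ F := closure_minimal Set.inter_subset_left hFc.isClosed
    exact Set.disjoint_left.1 hFΩ (this h) hz
  have hdpos : 0 < infDist z A := (infDist_pos_iff_notMem_closure hAne).1 hzA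
  obtain ⟨z', hz'A, hz'⟩ := (infDist_lt_iff hAne (r := 2 * infDist z A)).1 (by linarith)
  have hker : ∀ x ∈ A, ENNReal.ofReal (Real.log (R / dist z x)) ≤
      ENNReal.ofReal (Real.log 3) + Ker R (z', x) := by
    intro x hx
    by_cases hzx : z' = x
    · simp [Ker, hzx]
    · simp only [Ker, if_neg hzx]
      have h0 : 0 < dist z' x := dist_pos.2 hzx
      have h1 : infDist z A ≤ dist z x := infDist_le_dist_of_mem hx
      have h2 : 0 < dist z x := by linarith
      have h3 : dist z' x ≤ 3 * dist z x := by
        have := dist_triangle z' z x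
        rw [dist_comm z' z] at this
        linarith
      refine le_trans (ENNReal.ofReal_le_ofReal ?_) ENNReal.ofReal_add_le
      rw [← Real.log_mul (by norm_num) (by positivity)]
      apply Real.log_le_log (by positivity)
      rw [mul_div_assoc', div_le_div_iff₀ h2 h0]
      nlinarith
  have hlin : ∫⁻ x, ENNReal.ofReal (Real.log (R / dist z x)) ∂ν ≤
      ENNReal.ofReal (4 * E₀ + Real.log 3) := by
    calc _ ≤ ∫⁻ x, (ENNReal.ofReal (Real.log 3) + Ker R (z', x)) ∂ν := by
          apply lintegral_mono_ae
          filter_upwards [hmemA] with x hx using hker x hx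
      _ = ENNReal.ofReal (Real.log 3) + ∫⁻ x, Ker R (z', x) ∂ν := by
          rw [lintegral_add_left measurable_const]; simp
      _ ≤ ENNReal.ofReal (Real.log 3) + ENNReal.ofReal (4 * E₀) := by
          gcongr; exact hpot z' hz'A
      _ = _ := by rw [← ENNReal.ofReal_add hl3.le (by linarith), add_comm]
  rw [integral_eq_lintegral_pos_part_sub_lintegral_neg_part hintgr]
  have h1 := ENNReal.toReal_mono ENNReal.ofReal_ne_top hlin
  rw [ENNReal.toReal_ofReal (by linarith)] at h1
  have h2 : 0 ≤ (∫⁻ x, ENNReal.ofReal (-Real.log (R / dist z x)) ∂ν).toReal :=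
    ENNReal.toReal_nonneg
  linarith

end Aux15


/-- let `Ω ⊂ ℝ²` be bounded open Wiener regular with Green function `g` and
harmonic measure `ω`, and `B̄` a closed ball centered at `∂Ω` with
`Cap_L((1/4)B̄ \ Ω) ≥ c₁ Cap_L(B̄)`.  Then `g(z,y) ≤ C(c₁) ω^z(8B̄)` for all
`z ∈ Ω \ 2B̄` and `y ∈ (1/5)B̄ ∩ Ω`. -/
theorem stmt_15 (c₁ : ℝ) (hc₁ : 0 < c₁) :
    ∃ C : ℝ, 0 < C ∧
      ∀ (Ω : Set (EuclideanSpace ℝ (Fin 2))), IsOpen Ω → Bornology.IsBounded Ω →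
        Ω.Nonempty →
        ∀ ω : EuclideanSpace ℝ (Fin 2) → Measure (EuclideanSpace ℝ (Fin 2)),
          IsHarmonicMeasureOfWienerRegular Ω ω →
          ∀ (x₀ : EuclideanSpace ℝ (Fin 2)) (R : ℝ), x₀ ∈ frontier Ω → 0 < R →
            c₁ * logCap (closedBall x₀ R) ≤ logCap (closedBall x₀ (R / 4) \ Ω) →
            ∀ z ∈ Ω \ closedBall x₀ (2 * R),
              ∀ y ∈ closedBall x₀ (R / 5) ∩ Ω,
                green ω z y ≤ C * (ω z (closedBall x₀ (8 * R))).toReal := by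
  obtain ⟨M, hM, hcap⟩ := Aux15.cap_part c₁ hc₁
  obtain ⟨C, hC, hpde⟩ := Aux15.pde_part M hM
  refine ⟨C, hC, ?_⟩
  intro Ω hΩ hb _ ω hω x₀ R _ hR hc z hz y hy
  obtain ⟨ν, hν1, hν2, hν3⟩ := hcap Ω hΩ x₀ R hR hc
  exact hpde Ω hΩ hb ω hω x₀ R hR ν hν1 hν2 hν3 z hz y hy
end
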